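/- Let K be a local field (i.e. R, C, or a finite extension of Q_p for some prime p) and let S be a smooth cubic surface in P^3 over K. Then: (i) the group H^0_S(K) is finite; (ii) the natural map S(K) → H_S(K) given by P ↦ [P] is locally constant, where S(K) carries the topology induced by K. -/

import Mathlib

/- Common framework: points, lines, intersection divisors, the secant-tangent span,
the groups `H_S(K)`, geometric notions over the algebraic closure, and topologies. -/

open MvPolynomial

noncomputable section

namespace CubicSurf

variable {K L : Type*} [Field K] [Field L] {n : ℕ}

/-- The set of `K`-rational points of the projective hypersurface `F = 0`. -/
def zeroSet (F : MvPolynomial (Fin n) K) : Set (Projectivization K (Fin n → K)) :=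
  {P | eval P.rep F = 0}

/-- The binary form obtained by restricting `F` to the line spanned by `u` and `v`,
via the parametrization `(s : t) ↦ s • u + t • v`. -/
def lineRestrict (F : MvPolynomial (Fin n) K) (u v : Fin n → K) : MvPolynomial (Fin 2) K :=
  aeval (fun i => C (u i) * X 0 + C (v i) * X 1) F

/-- A projective line: a 2-dimensional linear subspace of `K^n`. -/
def IsLine (W : Submodule K (Fin n → K)) : Prop := Module.finrank K W = 2

/-- The line `W` lies (geometrically) on the hypersurface `F = 0`. -/
def LineOnSurf (F : MvPolynomial (Fin n) K) (W : Submodule K (Fin n → K)) : Prop :=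
  ∀ u v : Fin n → K, u ∈ W → v ∈ W → lineRestrict F u v = 0

/-- The projective point `P` lies on the line `W`. -/
def OnLine (W : Submodule K (Fin n → K)) (P : Projectivization K (Fin n → K)) : Prop :=
  P.rep ∈ W

/-- The set of `K`-points of the line `W`. -/
def linePts (W : Submodule K (Fin n → K)) : Set (Projectivization K (Fin n → K)) :=
  {P | OnLine W P}

/-- `ℓ · S = P + Q + R`: the intersection divisor (with multiplicities) of the line `W`
with the hypersurface `F = 0` is `P + Q + R`. -/
def MeetsIn (F : MvPolynomial (Fin n) K) (W : Submodule K (Fin n → K))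
    (P Q R : Projectivization K (Fin n → K)) : Prop :=
  ∃ (u v : Fin n → K) (_ : u ∈ W) (_ : v ∈ W) (_ : LinearIndependent K ![u, v])
    (c : K) (l m : Fin 3 → K) (h : ∀ k, l k • u + m k • v ≠ 0),
      c ≠ 0 ∧
      lineRestrict F u v = C c * ∏ k : Fin 3, (C (m k) * X 0 - C (l k) * X 1) ∧
      Projectivization.mk K _ (h 0) = P ∧
      Projectivization.mk K _ (h 1) = Q ∧
      Projectivization.mk K _ (h 2) = R

/-- Membership in the span of a set of points under the secant/tangent process:
the smallest subset of `S(K)` containing `B` such that whenever `P`, `Q` are in it and a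
`K`-line `ℓ ⊄ S` satisfies `ℓ·S = P+Q+R` with `R ∈ S(K)`, then `R` is in it. -/
inductive SpanMem (F : MvPolynomial (Fin n) K) (B : Set (Projectivization K (Fin n → K))) :
    Projectivization K (Fin n → K) → Prop
  | base (P : Projectivization K (Fin n → K)) (hP : P ∈ B) : SpanMem F B P
  | secant (P Q R : Projectivization K (Fin n → K)) (W : Submodule K (Fin n → K))
      (hW : IsLine W) (hWS : ¬ LineOnSurf F W) (hP : SpanMem F B P) (hQ : SpanMem F B Q)
      (hR : R ∈ zeroSet F) (hm : MeetsIn F W P Q R) : SpanMem F B R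

/-- The span of a set of points under the secant/tangent process. -/
def Span (F : MvPolynomial (Fin n) K) (B : Set (Projectivization K (Fin n → K))) :
    Set (Projectivization K (Fin n → K)) :=
  {P | SpanMem F B P}

/-- Smoothness of the projective hypersurface `F = 0`: over the algebraic closure there is
no nonzero common zero of `F` and all of its partial derivatives. -/
def IsSmoothHypersurf (F : MvPolynomial (Fin n) K) : Prop :=
  ∀ v : Fin n → AlgebraicClosure K,
    eval v (MvPolynomial.map (algebraMap K (AlgebraicClosure K)) F) = 0 →
    (∀ i, eval v (pderiv i (MvPolynomial.map (algebraMap K (AlgebraicClosure K)) F)) = 0) →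
    v = 0

/-- A smooth cubic hypersurface. -/
def SmoothCubic (F : MvPolynomial (Fin n) K) : Prop :=
  F.IsHomogeneous 3 ∧ IsSmoothHypersurf F

/-- The linear form cutting out the tangent plane `Π_P` of `F = 0` at `P`,
evaluated at the representative of a point `Q`; `Q ∈ Π_P` iff this vanishes. -/
def tangentEval (F : MvPolynomial (Fin n) K) (P Q : Projectivization K (Fin n → K)) : K :=
  ∑ i, eval P.rep (pderiv i F) * Q.rep i

/-- The set of `K`-points of the tangent plane `Π_P`. -/
def tangentPlanePts (F : MvPolynomial (Fin n) K) (P : Projectivization K (Fin n → K)) :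
    Set (Projectivization K (Fin n → K)) :=
  {Q | tangentEval F P Q = 0}

/-- The set of `K`-points of `Γ_P = S ∩ Π_P`. -/
def GammaPts (F : MvPolynomial (Fin n) K) (P : Projectivization K (Fin n → K)) :
    Set (Projectivization K (Fin n → K)) :=
  zeroSet F ∩ tangentPlanePts F P

/-! ### Base change along a field embedding -/

/-- Base change of a vector along a field embedding. -/
def clVec (φ : K →+* L) (v : Fin n → K) : Fin n → L := fun i => φ (v i)

lemma clVec_ne_zero (φ : K →+* L) {v : Fin n → K} (hv : v ≠ 0) : clVec φ v ≠ 0 := by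
  intro h
  apply hv
  funext i
  have := congrFun h i
  simpa [clVec] using φ.injective (by simpa [clVec] using this)

/-- Base change of a projective point along a field embedding. -/
def clPt (φ : K →+* L) (P : Projectivization K (Fin n → K)) :
    Projectivization L (Fin n → L) :=
  Projectivization.mk L (clVec φ P.rep) (clVec_ne_zero φ P.rep_nonzero)

lemma eval_smul_of_isHomogeneous {R : Type*} [CommSemiring R] {F : MvPolynomial (Fin n) R}
    {d : ℕ} (hF : F.IsHomogeneous d) (a : R) (w : Fin n → R) :
    eval (a • w) F = a ^ d * eval w F := by
  classical
  rw [eval_eq', eval_eq', Finset.mul_sum]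
  refine Finset.sum_congr rfl fun s hs => ?_
  have hdeg : ∑ i, s i = d := by
    have h1 := hF (MvPolynomial.mem_support_iff.mp hs)
    rw [Finsupp.weight_apply] at h1
    rw [← h1, Finsupp.sum_fintype]
    · simp
    · intro i; simp
  have key : ∀ i : Fin n, (a • w) i ^ s i = a ^ s i * w i ^ s i := by
    intro i; simp [mul_pow]
  rw [Finset.prod_congr rfl (fun i _ => key i), Finset.prod_mul_distrib,
    Finset.prod_pow_eq_pow_sum, hdeg]
  ring

lemma clVec_eval (φ : K →+* L) (F : MvPolynomial (Fin n) K) (v : Fin n → K) :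
    eval (clVec φ v) (MvPolynomial.map φ F) = φ (eval v F) := by
  rw [eval_map]
  have h : φ (eval v F) = φ (eval₂Hom (RingHom.id K) v F) := rfl
  rw [h, map_eval₂Hom]
  rfl

/-- A point given by a vector on which a homogeneous `F` vanishes lies in the zero set. -/
lemma mk_mem_zeroSet {F : MvPolynomial (Fin n) K} {d : ℕ} (hF : F.IsHomogeneous d)
    {v : Fin n → K} (hv : v ≠ 0) (h : eval v F = 0) :
    Projectivization.mk K v hv ∈ zeroSet F := by
  obtain ⟨a, ha⟩ := Projectivization.exists_smul_eq_mk_rep K v hv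
  show eval (Projectivization.mk K v hv).rep F = 0
  have hrep : (Projectivization.mk K v hv).rep = (a : K) • v := by
    rw [← ha, Units.smul_def]
  rw [hrep, eval_smul_of_isHomogeneous hF, h, mul_zero]

lemma clPt_mem_zeroSet (φ : K →+* L) {F : MvPolynomial (Fin n) K} {d : ℕ}
    (hF : F.IsHomogeneous d) {P : Projectivization K (Fin n → K)} (hP : P ∈ zeroSet F) :
    clPt φ P ∈ zeroSet (MvPolynomial.map φ F) := by
  apply mk_mem_zeroSet (hF.map φ)
  rw [clVec_eval, hP, map_zero]

/-- The induced map on points of `S` under base change of the field. -/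
def ptMap (φ : K →+* L) {F : MvPolynomial (Fin n) K} {d : ℕ} (hF : F.IsHomogeneous d)
    (P : zeroSet F) : zeroSet (MvPolynomial.map φ F) :=
  ⟨clPt φ P.1, clPt_mem_zeroSet φ hF P.2⟩

/-- A subspace of `L^n` is defined over `K` (w.r.t. `φ : K →+* L`) if it is spanned by
the base change of a `K`-subspace. -/
def DefinedOver (φ : K →+* L) (W : Submodule L (Fin n → L)) : Prop :=
  ∃ W₀ : Submodule K (Fin n → K), W = Submodule.span L (clVec φ '' (W₀ : Set (Fin n → K)))

/-! ### Asymptotic lines, parabolic points, Eckardt points -/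

/-- The line `W` is asymptotic to `F = 0` at `P`: the intersection multiplicity
`(ℓ · S)_P` is at least 3. -/
def AsymptoticAt (F : MvPolynomial (Fin n) K) (W : Submodule K (Fin n → K))
    (P : Projectivization K (Fin n → K)) : Prop :=
  IsLine W ∧ P.rep ∈ W ∧
    ∃ v ∈ W, LinearIndependent K ![P.rep, v] ∧
      ∃ c : K, lineRestrict F P.rep v = C c * (X 1) ^ 3

/-- The set of asymptotic lines at `P`. -/
def AsymSet (F : MvPolynomial (Fin n) K) (P : Projectivization K (Fin n → K)) :
    Set (Submodule K (Fin n → K)) :=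
  {W | AsymptoticAt F W P}

/-- A point of a hypersurface is parabolic (relative to the given field) if it does
not have exactly two distinct asymptotic lines (i.e. it has one or infinitely many). -/
def ParabolicAt (F : MvPolynomial (Fin n) K) (P : Projectivization K (Fin n → K)) : Prop :=
  ¬ ∃ W₁ W₂ : Submodule K (Fin n → K), W₁ ≠ W₂ ∧ AsymSet F P = {W₁, W₂}

/-- An Eckardt point (relative to the given field): three distinct lines lying on the
surface pass through `P`. -/
def EckardtAt (F : MvPolynomial (Fin n) K) (P : Projectivization K (Fin n → K)) : Prop :=
  ∃ W₁ W₂ W₃ : Submodule K (Fin n → K), W₁ ≠ W₂ ∧ W₁ ≠ W₃ ∧ W₂ ≠ W₃ ∧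
    (∀ W ∈ ({W₁, W₂, W₃} : Set (Submodule K (Fin n → K))),
      IsLine W ∧ LineOnSurf F W ∧ OnLine W P)

section geometric

variable (F : MvPolynomial (Fin n) K)

/-- `F` base changed to the algebraic closure of `K`. -/
def clF : MvPolynomial (Fin n) (AlgebraicClosure K) :=
  MvPolynomial.map (algebraMap K (AlgebraicClosure K)) F

/-- A `K`-point of `S` is parabolic (a geometric notion, checked over `K̄`). -/
def IsParabolic (P : Projectivization K (Fin n → K)) : Prop :=
  ParabolicAt (clF F) (clPt (algebraMap K (AlgebraicClosure K)) P)

/-- A `K`-point of `S` is an Eckardt point (a geometric notion, checked over `K̄`). -/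
def IsEckardt (P : Projectivization K (Fin n → K)) : Prop :=
  EckardtAt (clF F) (clPt (algebraMap K (AlgebraicClosure K)) P)

/-- A `K`-point of `S` is `K`-hyperbolic: it has exactly two asymptotic lines over `K̄`,
and both are defined over `K`. -/
def IsHyperbolic (P : Projectivization K (Fin n → K)) : Prop :=
  ∃ W₁ W₂, W₁ ≠ W₂ ∧
    AsymSet (clF F) (clPt (algebraMap K (AlgebraicClosure K)) P) = {W₁, W₂} ∧
    DefinedOver (algebraMap K (AlgebraicClosure K)) W₁ ∧
    DefinedOver (algebraMap K (AlgebraicClosure K)) W₂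

/-- A `K`-point of `S` is `K`-ternary: at least one of the asymptotic lines of `S`
through `P` is defined over `K`. -/
def IsTernary (P : Projectivization K (Fin n → K)) : Prop :=
  ∃ W ∈ AsymSet (clF F) (clPt (algebraMap K (AlgebraicClosure K)) P),
    DefinedOver (algebraMap K (AlgebraicClosure K)) W

end geometric

/-! ### The group `H_S(K)` -/

variable (F : MvPolynomial (Fin n) K)

/-- `G_S(K)`: the free abelian group on the set `S(K)`. -/
abbrev GS := FreeAbelianGroup (zeroSet F)

/-- The degree homomorphism `G_S(K) → ℤ`, `Σ aᵢ Pᵢ ↦ Σ aᵢ`. -/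
def degHom : GS F →+ ℤ := FreeAbelianGroup.lift fun _ => (1 : ℤ)

/-- `P + Q + R` is a "three point sum": either cut out on `S` with multiplicity by a
`K`-line not contained in `S`, or `P`, `Q`, `R` all lie on a `K`-line contained in `S`. -/
def TripleRel (P Q R : zeroSet F) : Prop :=
  ∃ W : Submodule K (Fin n → K), IsLine W ∧
    ((¬ LineOnSurf F W ∧ MeetsIn F W P.1 Q.1 R.1) ∨
      (LineOnSurf F W ∧ OnLine W P.1 ∧ OnLine W Q.1 ∧ OnLine W R.1))

/-- `G'_S(K)`: the subgroup generated by all three point sums. -/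
def Gp : AddSubgroup (GS F) :=
  AddSubgroup.closure {x | ∃ P Q R : zeroSet F, TripleRel F P Q R ∧
    x = FreeAbelianGroup.of P + FreeAbelianGroup.of Q + FreeAbelianGroup.of R}

/-- `G''_S(K)`: the degree-0 part of `G'_S(K)`. -/
def Gpp : AddSubgroup (GS F) := Gp F ⊓ (degHom F).ker

/-- `H_S(K) = G_S(K)/G''_S(K)`. -/
abbrev HS := GS F ⧸ Gpp F

/-- The class `[P] ∈ H_S(K)` of a point `P ∈ S(K)`. -/
def HClass (P : zeroSet F) : HS F := QuotientAddGroup.mk' (Gpp F) (FreeAbelianGroup.of P)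

/-- The degree homomorphism `H_S(K) → ℤ`. -/
def HdegHom : HS F →+ ℤ :=
  QuotientAddGroup.lift (Gpp F) (degHom F) (fun _ hx => hx.2)

/-- `H⁰_S(K)`: the degree-0 part of `H_S(K)`. -/
def H0 : AddSubgroup (HS F) := (HdegHom F).ker

@[simp] lemma HdegHom_HClass (P : zeroSet F) : HdegHom F (HClass F P) = 1 := by
  simp [HdegHom, HClass, degHom]

/-- The class `[P] - [Q]`, as an element of `H⁰_S(K)`. -/
def H0diff (P Q : zeroSet F) : H0 F :=
  ⟨HClass F P - HClass F Q, by simp [H0, AddMonoidHom.mem_ker, map_sub]⟩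

/-! ### mod-`p` dimensions and torsion -/

/-- `A/pA` for an abelian group `A`. -/
abbrev ModP (p : ℕ) (A : Type*) [AddCommGroup A] : Type _ :=
  A ⧸ (AddMonoidHom.range (nsmulAddMonoidHom p : A →+ A))

instance ModP.instModule (p : ℕ) (A : Type*) [AddCommGroup A] : Module (ZMod p) (ModP p A) :=
  QuotientAddGroup.zmodModule (fun x => ⟨x, rfl⟩)

/-- `dim_{F_p} A/pA`. -/
def dimModP (p : ℕ) (A : Type*) [AddCommGroup A] : Cardinal := Module.rank (ZMod p) (ModP p A)

/-- The `k`-torsion subgroup `A[k]` of an abelian group `A`. -/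
def torsion (k : ℕ) (A : Type*) [AddCommGroup A] : AddSubgroup A :=
  (nsmulAddMonoidHom k : A →+ A).ker

instance torsion.instModule (k : ℕ) (A : Type*) [AddCommGroup A] :
    Module (ZMod k) (torsion k A) :=
  AddCommGroup.zmodModule (fun x => Subtype.ext x.2)

/-- `dim_{F_k} A[k]`: the dimension of the `k`-torsion subgroup (for `k` prime). -/
def dimTorsion (k : ℕ) (A : Type*) [AddCommGroup A] : Cardinal :=
  Module.rank (ZMod k) (torsion k A)

/-! ### Topologies -/

/-- The quotient topology on projective space induced by the topology of `K`. -/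
def projTop (K : Type*) [Field K] [TopologicalSpace K] (n : ℕ) :
    TopologicalSpace (Projectivization K (Fin n → K)) :=
  TopologicalSpace.coinduced
    (fun v : {v : Fin n → K // v ≠ 0} => Projectivization.mk K v.1 v.2) inferInstance

/-- The induced topology on the set of `K`-points of `S`. -/
def surfTop (F : MvPolynomial (Fin n) K) [TopologicalSpace K] :
    TopologicalSpace (zeroSet F) :=
  TopologicalSpace.induced Subtype.val (projTop K n)

/-- `K` (a topological field) is a local field: it is isomorphic, as a topological field,
to `ℝ`, to `ℂ`, or to a finite extension of `ℚ_p` for some prime `p` (with its canonical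
topology, namely the `ℚ_p`-vector space topology). -/
def IsLocalField (K : Type*) [Field K] [TopologicalSpace K] : Prop :=
  (∃ e : K ≃+* ℝ, IsHomeomorph e) ∨ (∃ e : K ≃+* ℂ, IsHomeomorph e) ∨
    (∃ (p : ℕ), p.Prime ∧ ∃ (_ : Fact p.Prime) (f : ℚ_[p] →+* K) (m : ℕ)
      (e : K ≃+ (Fin m → ℚ_[p])),
      (∀ (c : ℚ_[p]) (x : K), e (f c * x) = c • e x) ∧ IsHomeomorph e)

end CubicSurf

/-! Let `h` be the common class of all three point sums. If a tangent line of `S` at `R` meets `S`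
again in `P`, then `2[R] + [P] = h`, so `[P]` does not depend on the line; and if `Q` lies on the
tangent plane of `S` at `P`, then `2[P] + [Q] = h`. Hence all `Q` that are linked in this way to a
fixed `R` have the same class `h - 2(h - 2[R])`. As the tangent line at `R` varies, `P` runs through
a curve which is not a point, and because the Gauss map of a smooth cubic is finite the tangent
planes at `P` move; the implicit function theorem then shows that they sweep out a neighbourhood of
some `Q₀ ∈ S(K)`. So the class map is constant near `Q₀`, and secants carry local constancy from one
point to any other.

Since `S(K)` is compact, only finitely many classes occur. Any two points of `S(K)` lie on a line
with a third one, so the finite set `C` of classes is closed under `(x, y) ↦ h - x - y`, hence under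
`(x, y, z) ↦ x - y + z`; thus `C` is a coset of `H⁰`.
-/

namespace CubicSurf

open Filter Topology
open scoped Polynomial

/-! ### The polar form of a cubic form -/

section PolarForm

variable {K : Type*} [Field K] {n : ℕ}

lemma pderiv_comm {σ R : Type*} [CommRing R] (i j : σ) (G : MvPolynomial σ R) :
    pderiv i (pderiv j G) = pderiv j (pderiv i G) := by
  classical
  have hbracket : ⁅pderiv (R := R) i, pderiv (R := R) j⁆ = 0 :=
    MvPolynomial.derivation_ext fun k => by
      simp [Derivation.commutator_apply, pderiv_X, Pi.single_apply, apply_ite]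
  simpa [Derivation.commutator_apply, sub_eq_zero] using DFunLike.congr_fun hbracket G

lemma pderiv_pderiv_pderiv_eq_C {σ R : Type*} [CommSemiring R] {G : MvPolynomial σ R}
    (hG : G.IsHomogeneous 3) (i j k : σ) :
    pderiv i (pderiv j (pderiv k G)) = C (coeff 0 (pderiv i (pderiv j (pderiv k G)))) := by
  have h : (pderiv i (pderiv j (pderiv k G))).IsHomogeneous 0 := hG.pderiv.pderiv.pderiv
  exact totalDegree_eq_zero_iff_eq_C.1 (Nat.le_zero.1 h.totalDegree_le)

lemma natCast_smul_aeval_eq_sum {A : Type*} [CommRing A] [Algebra K A] {d : ℕ}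
    {G : MvPolynomial (Fin n) K} (hG : G.IsHomogeneous d) (v : Fin n → A) :
    (d : K) • aeval v G = ∑ i, v i * aeval v (pderiv i G) := by
  have h := congrArg (aeval v) hG.sum_X_mul_pderiv
  simpa [map_sum, Nat.cast_smul_eq_nsmul] using h.symm

section Polar

variable (A : Type*) {B : Type*} [CommRing A] [Algebra K A] [CommRing B] [Algebra K B]
  (F : MvPolynomial (Fin n) K)

/-- The polar form of a cubic form `F`, i.e. the symmetric trilinear form `T` with
`T v v v = F v`, extended to vectors with entries in a `K`-algebra `A`. For a homogeneous `F`
of degree `3` the third derivatives are constants, so we read them off at the origin. -/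
def polar : (Fin n → A) →ₗ[A] (Fin n → A) →ₗ[A] (Fin n → A) →ₗ[A] A :=
  ∑ i, (LinearMap.proj i).smulRight (Matrix.toLinearMap₂' A (.of fun j k =>
    algebraMap K A (coeff 0 (pderiv i (pderiv j (pderiv k F))) / 6)))

lemma polar_apply (u v w : Fin n → A) :
    polar A F u v w = ∑ i, ∑ j, ∑ k,
      u i * v j * w k * algebraMap K A (coeff 0 (pderiv i (pderiv j (pderiv k F))) / 6) := by
  simp only [polar, LinearMap.sum_apply, LinearMap.smulRight_apply, LinearMap.proj_apply,
    LinearMap.smul_apply, smul_eq_mul, Matrix.toLinearMap₂'_apply, Matrix.of_apply,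
    Finset.mul_sum, mul_assoc]

lemma polar_left_comm (u v w : Fin n → A) : polar A F u v w = polar A F v u w := by
  simp only [polar_apply]
  rw [Finset.sum_comm]
  refine Finset.sum_congr rfl fun i _ => Finset.sum_congr rfl fun j _ =>
    Finset.sum_congr rfl fun k _ => ?_
  rw [pderiv_comm j i, mul_comm (u j)]

lemma polar_right_comm (u v w : Fin n → A) : polar A F u v w = polar A F u w v := by
  simp only [polar_apply]
  refine Finset.sum_congr rfl fun i _ => ?_
  rw [Finset.sum_comm]
  refine Finset.sum_congr rfl fun j _ => Finset.sum_congr rfl fun k _ => ?_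
  rw [pderiv_comm k j, mul_right_comm (u i)]

variable {A}

lemma map_polar (φ : A →ₐ[K] B) (u v w : Fin n → A) :
    φ (polar A F u v w) = polar B F (φ ∘ u) (φ ∘ v) (φ ∘ w) := by
  simp only [polar_apply, map_sum, map_mul, AlgHom.commutes, Function.comp_apply]

lemma polar_smul_add_smul (s t : A) (u v : Fin n → A) :
    polar A F (s • u + t • v) (s • u + t • v) (s • u + t • v) =
      s ^ 3 * polar A F u u u + 3 * s ^ 2 * t * polar A F u u v +
        3 * s * t ^ 2 * polar A F u v v + t ^ 3 * polar A F v v v := by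
  simp only [map_add, map_smul, LinearMap.add_apply, LinearMap.smul_apply, smul_eq_mul]
  rw [polar_right_comm A F u v u, polar_left_comm A F v u u, polar_right_comm A F u v u,
    polar_left_comm A F v u v, polar_right_comm A F v v u, polar_left_comm A F v u v]
  ring

lemma polar_eq_zero_of_forall_single {u v : Fin n → A}
    (h : ∀ i, polar A F u v (Pi.single i 1) = 0) : polar A F u v = 0 :=
  LinearMap.pi_ext' fun i => LinearMap.ext_ring (h i)

variable {F} [CharZero K]

lemma aeval_pderiv_eq_polar (hF : F.IsHomogeneous 3) (v : Fin n → A) (k : Fin n) :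
    aeval v (pderiv k F) = (3 : K) • polar A F v v (Pi.single k 1) := by
  have hthird (i j : Fin n) : aeval v (pderiv i (pderiv j (pderiv k F))) =
      (6 : K) • algebraMap K A (coeff 0 (pderiv i (pderiv j (pderiv k F))) / 6) := by
    rw [pderiv_pderiv_pderiv_eq_C hF, aeval_C, Algebra.smul_def, ← map_mul,
      mul_div_cancel₀ _ (by norm_num), coeff_zero_C]
  have hsnd (j : Fin n) : aeval v (pderiv j (pderiv k F)) =
      ∑ i, v i * aeval v (pderiv i (pderiv j (pderiv k F))) := by
    simpa using natCast_smul_aeval_eq_sum hF.pderiv.pderiv v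
  have hfst : (2 : K) • aeval v (pderiv k F) = ∑ j, v j * aeval v (pderiv j (pderiv k F)) := by
    simpa using natCast_smul_aeval_eq_sum hF.pderiv v
  rw [← (IsUnit.mk0 (2 : K) two_ne_zero).smul_left_cancel, hfst, smul_smul, polar_apply]
  simp only [hsnd, hthird, Pi.single_apply, mul_ite, ite_mul, mul_one, mul_zero, zero_mul,
    Finset.sum_ite_eq', Finset.mem_univ, if_true, Finset.mul_sum, Finset.smul_sum]
  rw [Finset.sum_comm]
  refine Finset.sum_congr rfl fun i _ => Finset.sum_congr rfl fun j _ => ?_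
  rw [mul_smul_comm, mul_smul_comm, mul_left_comm, mul_assoc]
  norm_num

lemma aeval_eq_polar (hF : F.IsHomogeneous 3) (v : Fin n → A) :
    aeval v F = polar A F v v v := by
  have heuler : (3 : K) • aeval v F = ∑ i, v i * aeval v (pderiv i F) := by
    simpa using natCast_smul_aeval_eq_sum hF v
  rw [← (IsUnit.mk0 (3 : K) three_ne_zero).smul_left_cancel, heuler]
  simp only [aeval_pderiv_eq_polar hF, mul_smul_comm, ← Finset.smul_sum]
  simp only [← smul_eq_mul, ← map_smul, ← map_sum, ← pi_eq_sum_univ' v]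

end Polar

end PolarForm

/-! ### Polynomial vectors and the Gauss map -/

section GaussMap

variable {K : Type*} [Field K] {n : ℕ}

lemma exists_eq_smul_and_span_range_eq_top {ι R : Type*} [CommRing R] [IsDomain R]
    [IsPrincipalIdealRing R] {P : ι → R} (hP : P ≠ 0) :
    ∃ g : R, g ≠ 0 ∧ ∃ Q : ι → R, P = g • Q ∧ Ideal.span (Set.range Q) = ⊤ := by
  obtain ⟨g, hg⟩ := IsPrincipalIdealRing.principal (Ideal.span (Set.range P))
  have hdvd (i : ι) : g ∣ P i := by
    rw [← Ideal.mem_span_singleton, Ideal.span, ← hg]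
    exact Ideal.subset_span ⟨i, rfl⟩
  choose Q hQ using hdvd
  have hPQ : P = g • Q := funext hQ
  have hg0 : g ≠ 0 := by
    rintro rfl
    exact hP (hPQ.trans (zero_smul R Q))
  refine ⟨g, hg0, Q, hPQ, (Ideal.span_singleton_mul_right_inj hg0).1 ?_⟩
  rw [Ideal.span_mul_span', Set.singleton_mul, ← Set.range_comp, Ideal.mul_top]
  exact (congrArg (Ideal.span <| Set.range ·) hPQ).symm.trans hg

lemma span_range_eq_top_iff {ι : Type*} {Q : ι → K[X]} :
    Ideal.span (Set.range Q) = ⊤ ↔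
      ∀ t : AlgebraicClosure K, ∃ i, Polynomial.aeval t (Q i) ≠ 0 := by
  constructor
  · intro h t
    by_contra! hQ
    have hle : Ideal.span (Set.range Q) ≤ RingHom.ker (Polynomial.aeval (R := K) t) :=
      Ideal.span_le.2 (Set.range_subset_iff.2 hQ)
    exact RingHom.ker_ne_top _ (top_le_iff.1 (h ▸ hle))
  · intro h
    obtain ⟨g, hg⟩ := IsPrincipalIdealRing.principal (Ideal.span (Set.range Q))
    have hdvd (i : ι) : g ∣ Q i := by
      rw [← Ideal.mem_span_singleton, Ideal.span, ← hg]
      exact Ideal.subset_span ⟨i, rfl⟩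
    rw [hg]
    refine Ideal.span_singleton_eq_top.2 (Polynomial.isUnit_iff_degree_eq_zero.2 ?_)
    by_contra hdeg
    obtain ⟨t, ht⟩ := IsAlgClosed.exists_aeval_eq_zero (AlgebraicClosure K) g hdeg
    obtain ⟨i, hi⟩ := h t
    exact hi (zero_dvd_iff.1 (ht ▸ map_dvd (Polynomial.aeval t) (hdvd i)))

lemma derivative_eq_zero_of_wronskian_eq_zero {ι R : Type*} [CommRing R] [NoZeroDivisors R]
    {N : ι → R[X]} (hN : Ideal.span (Set.range N) = ⊤) {j : ι}
    (hW : ∀ i, Polynomial.wronskian (N i) (N j) = 0) : Polynomial.derivative (N j) = 0 := by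
  have hdvd : ∀ a ∈ Ideal.span (Set.range N), N j ∣ a * Polynomial.derivative (N j) := by
    intro a ha
    induction ha using Submodule.span_induction with
    | mem a ha =>
      obtain ⟨i, rfl⟩ := ha
      exact ⟨Polynomial.derivative (N i), by
        rw [mul_comm (N j)]
        exact sub_eq_zero.1 (hW i)⟩
    | zero => simp
    | add a b _ _ ha hb => simpa only [add_mul] using dvd_add ha hb
    | smul r a _ ha => simpa only [smul_eq_mul, mul_assoc] using ha.mul_left r
  exact Polynomial.dvd_derivative_iff.1 (by simpa using hdvd 1 (hN ▸ Submodule.mem_top))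

lemma comp_single_one {ι R S Φ : Type*} [DecidableEq ι] [MulZeroOneClass R] [MulZeroOneClass S]
    [FunLike Φ R S] [MonoidWithZeroHomClass Φ R S] (φ : Φ) (i : ι) :
    φ ∘ Pi.single i (1 : R) = Pi.single i 1 := by
  ext j
  simp [Pi.single_apply, apply_ite φ]

section PolynomialVectors

variable (F : MvPolynomial (Fin n) K)

lemma derivative_polar (P Q R : Fin n → K[X]) :
    Polynomial.derivative (polar K[X] F P Q R) =
      polar K[X] F (Polynomial.derivative ∘ P) Q R + polar K[X] F P (Polynomial.derivative ∘ Q) R +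
        polar K[X] F P Q (Polynomial.derivative ∘ R) := by
  simp only [polar_apply, Polynomial.derivative_sum, Polynomial.derivative_mul,
    Polynomial.algebraMap_apply, Polynomial.derivative_C, Function.comp_apply,
    ← Finset.sum_add_distrib]
  refine Finset.sum_congr rfl fun i _ => Finset.sum_congr rfl fun j _ =>
    Finset.sum_congr rfl fun k _ => ?_
  ring

lemma coeff_polar_of_natDegree_le {P Q : Fin n → K[X]} {k l : ℕ}
    (hP : ∀ i, (P i).natDegree ≤ k) (hQ : ∀ i, (Q i).natDegree ≤ l) (x : Fin n → K) :
    (polar K[X] F P Q (Polynomial.C ∘ x)).coeff (k + l) =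
      polar K F (fun i => (P i).coeff k) (fun i => (Q i).coeff l) x := by
  simp only [polar_apply, Polynomial.finsetSum_coeff, Function.comp_apply,
    Polynomial.algebraMap_apply, Polynomial.coeff_mul_C, Algebra.algebraMap_self, RingHom.id_apply,
    Polynomial.coeff_mul_add_eq_of_natDegree_le (hP _) (hQ _)]

variable {F} [CharZero K]

lemma SmoothCubic.eq_zero_of_polar_eq_zero (hF : SmoothCubic F) {L : Type*} [Field L]
    [Algebra K L] [Algebra.IsAlgebraic K L] {v : Fin n → L} (hv : polar L F v v = 0) : v = 0 := by
  let φ : L →ₐ[K] AlgebraicClosure K := IsAlgClosed.lift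
  have hgrad (w : Fin n → L) : polar (AlgebraicClosure K) F (φ ∘ v) (φ ∘ v) (φ ∘ w) = 0 := by
    rw [← map_polar, hv, LinearMap.zero_apply, map_zero]
  have hφv : φ ∘ v = 0 := hF.2 (φ ∘ v)
    (by rw [← aeval_eq_eval, aeval_map_algebraMap, aeval_eq_polar hF.1, hgrad])
    fun i => by
      rw [pderiv_map, ← aeval_eq_eval, aeval_map_algebraMap, aeval_pderiv_eq_polar hF.1,
        ← comp_single_one φ, hgrad, smul_zero]
  exact funext fun i => φ.injective (by simpa using congrFun hφv i)

lemma SmoothCubic.span_range_polar_eq_top (hF : SmoothCubic F) {Q : Fin n → K[X]}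
    (hQ : Ideal.span (Set.range Q) = ⊤) :
    Ideal.span (Set.range fun i => polar K[X] F Q Q (Pi.single i 1)) = ⊤ := by
  rw [span_range_eq_top_iff] at hQ ⊢
  intro t
  by_contra! hN
  obtain ⟨i, hi⟩ := hQ t
  refine hi (congrFun (hF.eq_zero_of_polar_eq_zero (v := Polynomial.aeval t ∘ Q) ?_) i)
  refine polar_eq_zero_of_forall_single F fun j => ?_
  rw [← comp_single_one (Polynomial.aeval (R := K) t), ← map_polar, hN]

lemma SmoothCubic.natDegree_eq_zero_of_natDegree_polar_eq_zero (hF : SmoothCubic F)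
    {Q : Fin n → K[X]} (hN : ∀ i, (polar K[X] F Q Q (Pi.single i 1)).natDegree = 0) (i : Fin n) :
    (Q i).natDegree = 0 := by
  have : Nonempty (Fin n) := ⟨i⟩
  obtain ⟨m, hm⟩ := Finite.exists_max fun i => (Q i).natDegree
  by_contra hi
  have hpos : 0 < (Q m).natDegree := (Nat.pos_of_ne_zero hi).trans_le (hm i)
  have hlead : (fun j => (Q j).coeff (Q m).natDegree) = 0 := by
    refine hF.eq_zero_of_polar_eq_zero (polar_eq_zero_of_forall_single F fun j => ?_)
    rw [← coeff_polar_of_natDegree_le F hm hm, comp_single_one Polynomial.C]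
    exact Polynomial.coeff_eq_zero_of_natDegree_lt (by rw [hN]; omega)
  have : Q m = 0 := Polynomial.leadingCoeff_eq_zero.1 (congrFun hlead m)
  simp [this] at hpos

/- The Gauss map `v ↦ T v v` of a smooth cubic is finite, so it is constant along a polynomial
curve only if the curve is a point. -/
lemma SmoothCubic.exists_eq_smul_C_comp (hF : SmoothCubic F) {P : Fin n → K[X]}
    (hP : ∀ i j, Polynomial.wronskian (polar K[X] F P P (Pi.single i 1))
      (polar K[X] F P P (Pi.single j 1)) = 0) :
    ∃ (g : K[X]) (p : Fin n → K), P = g • (Polynomial.C ∘ p) := by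
  rcases eq_or_ne P 0 with rfl | hP0
  · exact ⟨0, 0, (zero_smul _ _).symm⟩
  obtain ⟨g, hg, Q, rfl, hQ⟩ := exists_eq_smul_and_span_range_eq_top hP0
  have hwronskian (i j) : Polynomial.wronskian (polar K[X] F Q Q (Pi.single i 1))
      (polar K[X] F Q Q (Pi.single j 1)) = 0 := by
    have h := hP i j
    simp only [Polynomial.wronskian, map_smul, LinearMap.smul_apply, smul_eq_mul,
      Polynomial.derivative_mul] at h
    refine (mul_eq_zero.1 (?_ : g ^ 4 * _ = 0)).resolve_left (pow_ne_zero 4 hg)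
    rw [Polynomial.wronskian]
    linear_combination h
  have hconst := hF.natDegree_eq_zero_of_natDegree_polar_eq_zero fun j =>
    Polynomial.derivative_eq_zero.1 <| derivative_eq_zero_of_wronskian_eq_zero
      (hF.span_range_polar_eq_top hQ) (hwronskian · j)
  exact ⟨g, fun i => (Q i).coeff 0, congrArg (g • ·) <| funext fun i =>
    Polynomial.eq_C_of_natDegree_eq_zero (hconst i)⟩

lemma SmoothCubic.exists_polar_eq_zero_and_polar_derivative_ne_zero (hF : SmoothCubic F)
    {P : Fin n → K[X]} (hP : ∀ (g : K[X]) (p : Fin n → K), P ≠ g • (Polynomial.C ∘ p)) :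
    ∃ x, polar K[X] F P P x = 0 ∧ polar K[X] F P (Polynomial.derivative ∘ P) x ≠ 0 := by
  by_contra! hx
  obtain ⟨g, p, rfl⟩ := hF.exists_eq_smul_C_comp fun i j => by
    set N : Fin n → K[X] := fun i => polar K[X] F P P (Pi.single i 1) with hN
    have hderiv (j) : Polynomial.derivative (N j) =
        2 * polar K[X] F P (Polynomial.derivative ∘ P) (Pi.single j 1) := by
      have hzero : Polynomial.derivative ∘ Pi.single j (1 : K[X]) = 0 := by
        ext1 k; simp [Pi.single_apply, apply_ite Polynomial.derivative]
      rw [hN, derivative_polar, hzero, map_zero, add_zero, polar_left_comm, ← two_mul]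
    have h := hx (N i • Pi.single j 1 - N j • Pi.single i 1) (by simp [hN, mul_comm])
    simp only [map_sub, map_smul, smul_eq_mul] at h
    change Polynomial.wronskian (N i) (N j) = 0
    rw [Polynomial.wronskian, hderiv, hderiv]
    linear_combination 2 * h
  exact hP g p rfl

end PolynomialVectors

end GaussMap

/-! ### Hyperplane sections -/

section HyperplaneSections

variable {K : Type*} [Field K] {n : ℕ}

lemma exists_mem_ker_notMem {V : Type*} [AddCommGroup V] [Module K V] [FiniteDimensional K V]
    (ℓ : Module.Dual K V) {W : Submodule K V}
    (hW : Module.finrank K W + 1 < Module.finrank K V) : ∃ x, ℓ x = 0 ∧ x ∉ W := by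
  by_contra! h
  have hker := Submodule.finrank_mono (show ℓ.ker ≤ W from h)
  have hrange := ℓ.finrank_range_add_finrank_ker
  have hle := ℓ.range.finrank_le
  rw [Module.finrank_self] at hle
  omega

lemma polar_C_comp (F : MvPolynomial (Fin n) K) (u v w : Fin n → K) :
    polar K[X] F (Polynomial.C ∘ u) (Polynomial.C ∘ v) (Polynomial.C ∘ w) =
      Polynomial.C (polar K F u v w) :=
  (map_polar F (Algebra.ofId K K[X]) u v w).symm

lemma aeval_comp_C_comp_add_X_smul (u v : Fin n → K) (t : K) :
    Polynomial.aeval t ∘ (Polynomial.C ∘ u + (Polynomial.X : K[X]) • (Polynomial.C ∘ v)) =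
      u + t • v := by
  ext i
  simp [-Polynomial.X_mul_C]

variable {F : MvPolynomial (Fin n) K} [CharZero K]

lemma polar_eq_zero_of_forall_mem {W : Submodule K (Fin n → K)}
    (hW : ∀ u ∈ W, polar K F u u u = 0) {u v w : Fin n → K} (hu : u ∈ W) (hv : v ∈ W)
    (hw : w ∈ W) : polar K F u v w = 0 := by
  have huvw := hW _ (W.add_mem (W.add_mem hu hv) hw)
  have huv := hW _ (W.add_mem hu hv)
  have huw := hW _ (W.add_mem hu hw)
  have hvw := hW _ (W.add_mem hv hw)
  suffices h : 6 * polar K F u v w = 0 by simpa using h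
  simp only [map_add, LinearMap.add_apply, polar_left_comm K F, polar_right_comm K F]
    at huvw huv huw hvw ⊢
  linear_combination huvw - huv - huw - hvw + hW u hu + hW v hv + hW w hw

lemma SmoothCubic.exists_mem_ker_polar_ne_zero (hF : SmoothCubic F) (hn : 3 ≤ n)
    {ℓ : Module.Dual K (Fin n → K)} (hℓ : ℓ ≠ 0) : ∃ d, ℓ d = 0 ∧ polar K F d d d ≠ 0 := by
  by_contra! hker
  obtain ⟨m, hm⟩ : ∃ m, ℓ m = 1 := LinearMap.surjective hℓ 1
  obtain ⟨u, hu, hu0⟩ := exists_mem_ker_notMem ℓ (W := ⊥) (by simp; omega)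
  obtain ⟨v, hv, hvu⟩ := exists_mem_ker_notMem ℓ (W := K ∙ u)
    (by rw [finrank_span_singleton (by simpa using hu0), Module.finrank_fin_fun]; omega)
  have hpolar {x y : Fin n → K} (hx : ℓ x = 0) (hy : ℓ y = 0) (z : Fin n → K) :
      polar K F x y z = polar K F x y m * ℓ z := by
    have h := polar_eq_zero_of_forall_mem (W := ℓ.ker) hker hx hy (w := z - ℓ z • m) (by simp [hm])
    simpa [sub_eq_zero, mul_comm] using h
  set P := Polynomial.C ∘ u + (Polynomial.X : K[X]) • (Polynomial.C ∘ v) with hP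
  have hgrad (i) : polar K[X] F P P (Pi.single i 1) =
      polar K[X] F P P (Polynomial.C ∘ m) * Polynomial.C (ℓ (Pi.single i 1)) := by
    simp only [← comp_single_one (Polynomial.C : K →+* K[X]), hP, map_add, map_smul,
      LinearMap.add_apply, LinearMap.smul_apply, polar_C_comp, smul_eq_mul,
      hpolar hu hu (Pi.single _ _), hpolar hu hv (Pi.single _ _), hpolar hv hu (Pi.single _ _),
      hpolar hv hv (Pi.single _ _), map_mul]
    ring
  obtain ⟨g, q, hq⟩ := hF.exists_eq_smul_C_comp (P := P) fun i j => by
    rw [hgrad, hgrad, Polynomial.wronskian, Polynomial.derivative_mul, Polynomial.derivative_mul,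
      Polynomial.derivative_C, Polynomial.derivative_C]
    ring
  have heval (t : K) : u + t • v = g.eval t • q := by
    rw [← aeval_comp_C_comp_add_X_smul, ← hP, hq]
    ext i; simp
  have hu' : u = g.eval 0 • q := by simpa using heval 0
  have hv' : v = (g.eval 1 - g.eval 0) • q := by
    rw [sub_smul, ← hu', ← heval 1, one_smul, add_sub_cancel_left]
  have hg0 : g.eval 0 ≠ 0 := fun h => hu0 (by rw [hu', h, zero_smul]; exact zero_mem _)
  refine hvu (Submodule.mem_span_singleton.2 ⟨(g.eval 1 - g.eval 0) / g.eval 0, ?_⟩)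
  rw [hv', hu', smul_smul, div_mul_cancel₀ _ hg0]

end HyperplaneSections

/-! ### Points with nondegenerate tangent section -/

section TangentSections

variable {K : Type*} {n : ℕ}

/-- The third intersection point with the cubic `F = 0` of the line that is tangent at `u` and
passes through `d`; it is `0` if that line lies on the cubic. -/
def tangentPt {A : Type*} [Field K] [CommRing A] [Algebra K A] (F : MvPolynomial (Fin n) K)
    (u d : Fin n → A) : Fin n → A :=
  polar A F d d d • u - (3 * polar A F u d d) • d

lemma polar_tangentPt {A : Type*} [Field K] [CommRing A] [Algebra K A]
    {F : MvPolynomial (Fin n) K} {u d : Fin n → A} (hu : polar A F u u u = 0)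
    (hd : polar A F u u d = 0) :
    polar A F (tangentPt F u d) (tangentPt F u d) (tangentPt F u d) = 0 := by
  rw [tangentPt, sub_eq_add_neg, ← neg_smul, polar_smul_add_smul, hu, hd]
  ring

lemma eventually_exists_eq_zero {𝕜 E : Type*} [NontriviallyNormedField 𝕜] [CompleteSpace 𝕜]
    [NormedAddCommGroup E] [NormedSpace 𝕜 E] [CompleteSpace E] {φ : E × 𝕜 → 𝕜} {x₀ : E}
    {t₀ δ : 𝕜} (hφ : AnalyticAt 𝕜 φ (x₀, t₀)) (h₀ : φ (x₀, t₀) = 0)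
    (hδ : HasDerivAt (fun t => φ (x₀, t)) δ t₀) (hδ₀ : δ ≠ 0) {V : Set (E × 𝕜)}
    (hV : V ∈ 𝓝 (x₀, t₀)) : ∀ᶠ x in 𝓝 x₀, ∃ t, (x, t) ∈ V ∧ φ (x, t) = 0 := by
  have hstrict := hφ.hasStrictFDerivAt
  have hinv : (fderiv 𝕜 φ (x₀, t₀) ∘L .inr 𝕜 E 𝕜).IsInvertible := by
    refine ⟨ContinuousLinearEquiv.unitsEquivAut 𝕜 (Units.mk0 δ hδ₀), ?_⟩
    have hslice := hstrict.hasFDerivAt.comp_hasDerivAt t₀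
      ((hasDerivAt_const t₀ x₀).prodMk (hasDerivAt_id t₀))
    ext
    simpa using hδ.unique hslice
  have hgraph := tendsto_id.prodMk_nhds (hstrict.tendsto_implicitFunctionOfProdDomain hinv)
  filter_upwards [hgraph hV, hstrict.eventually_apply_implicitFunctionOfProdDomain hinv]
    with x hxV hx
  exact ⟨_, hxV, hx.trans h₀⟩

lemma SmoothCubic.exists_normal_frame [Field K] [CharZero K] {F : MvPolynomial (Fin n) K}
    (hF : SmoothCubic F) (hn : 3 ≤ n)
    {O : Fin n → K} (hO : O ≠ 0) (hFO : polar K F O O O = 0)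
    (hflat : ∀ d, polar K F O O d = 0 → polar K F O d d = 0) :
    ∃ d m, polar K F O O d = 0 ∧ polar K F O d m = 0 ∧ polar K F O m m = 0 ∧
      polar K F O O m ≠ 0 ∧ polar K F d d d ≠ 0 := by
  have hT : polar K F O O ≠ 0 := fun h => hO (hF.eq_zero_of_polar_eq_zero h)
  obtain ⟨m, hm⟩ := DFunLike.exists_ne hT
  obtain ⟨d, hd, hddd⟩ := hF.exists_mem_ker_polar_ne_zero hn hT
  rw [LinearMap.zero_apply] at hm
  set a := polar K F O d m / polar K F O O m with ha
  set b := polar K F O m m / (2 * polar K F O O m) with hb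
  refine ⟨d - a • O, m - b • O, by simp [hd, hFO], ?_, ?_, by simpa [hFO] using hm, ?_⟩
  · have hdO : polar K F O d O = 0 := by rw [polar_right_comm, hd]
    simp [hFO, hdO, ha, hm]
  · have hmO : polar K F O m O = polar K F O O m := polar_right_comm ..
    simp only [map_sub, map_smul, LinearMap.sub_apply, LinearMap.smul_apply, smul_eq_mul, hFO, hmO,
      hb]
    field
  · have hddO : polar K F d d O = 0 := by
      rw [polar_right_comm, polar_left_comm, hflat d hd]
    have hdOO : polar K F d O O = 0 := by rw [polar_left_comm, polar_right_comm, hd]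
    have h := polar_smul_add_smul F 1 (-a) d O
    rw [hddO, hdOO, hFO] at h
    rwa [sub_eq_add_neg, ← neg_smul, ← one_smul K d, h, one_pow, one_mul, mul_zero, mul_zero,
      mul_zero, add_zero, add_zero, add_zero]

lemma continuous_polar [Field K] [TopologicalSpace K] [IsTopologicalSemiring K] {X : Type*}
    [TopologicalSpace X] (F : MvPolynomial (Fin n) K) {f g h : X → Fin n → K}
    (hf : Continuous f) (hg : Continuous g) (hh : Continuous h) :
    Continuous fun x => polar K F (f x) (g x) (h x) := by
  simp only [polar_apply]
  fun_prop

lemma analyticAt_polar [NontriviallyNormedField K] {E : Type*} [NormedAddCommGroup E]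
    [NormedSpace K E] (F : MvPolynomial (Fin n) K) {f g h : E → Fin n → K} {x : E}
    (hf : AnalyticAt K f x) (hg : AnalyticAt K g x) (hh : AnalyticAt K h x) :
    AnalyticAt K (fun x => polar K F (f x) (g x) (h x)) x := by
  simp only [polar_apply]
  refine Finset.analyticAt_fun_sum _ fun i _ => Finset.analyticAt_fun_sum _ fun j _ =>
    Finset.analyticAt_fun_sum _ fun k _ => ?_
  exact (((analyticAt_pi_iff.1 hf i).mul (analyticAt_pi_iff.1 hg j)).mul
    (analyticAt_pi_iff.1 hh k)).mul analyticAt_const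

/- `R` is a point of the cubic near `O` on the line through `O` with direction `y`, and `x` is a
tangent vector at `R` close to a multiple of `d`. -/
lemma polar_eq_zero_of_normal_frame [Field K] {F : MvPolynomial (Fin n) K} {O d m : Fin n → K}
    (hO : polar K F O O O = 0) (hd : polar K F O O d = 0) (hdd : polar K F O d d = 0)
    (hdm : polar K F O d m = 0) (hmm : polar K F O m m = 0) {s z a : K} {R y x : Fin n → K}
    (hR : R = O + s • y) (hy : y = d + z • m) (ha : polar K F R R m = a)
    (hx : x = a • d + (z * (2 * polar K F O O m + a)) • m)
    (hsz : 3 * z * polar K F O O m + s ^ 2 * polar K F y y y = 0) :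
    polar K F R R R = 0 ∧ polar K F R R x = 0 ∧ polar K F R x x = s * polar K F y x x := by
  subst hy hx hR
  simp only [map_add, map_smul, LinearMap.add_apply, LinearMap.smul_apply, smul_eq_mul,
    polar_left_comm K F, polar_right_comm K F, hO, hd, hdd, hdm, hmm] at ha hsz ⊢
  refine ⟨?_, ?_, ?_⟩
  · linear_combination s * hsz
  · linear_combination a * hsz + 2 * z * polar K F O O m * ha
  · ring

lemma SmoothCubic.exists_polar_ne_zero [NontriviallyNormedField K] [CompleteSpace K] [CharZero K]
    {F : MvPolynomial (Fin n) K} (hF : SmoothCubic F) (hn : 3 ≤ n) {O : Fin n → K} (hO : O ≠ 0)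
    (hFO : polar K F O O O = 0) :
    ∃ R d : Fin n → K, polar K F R R R = 0 ∧ polar K F R R d = 0 ∧ polar K F R d d ≠ 0 := by
  by_contra! hflat
  obtain ⟨d, m, hd, hdm, hmm, hm, hddd⟩ := hF.exists_normal_frame hn hO hFO (hflat O · hFO)
  let y (p : K × K) : Fin n → K := d + p.2 • m
  let R (p : K × K) : Fin n → K := O + p.1 • y p
  let a (p : K × K) : K := polar K F (R p) (R p) m
  let x (p : K × K) : Fin n → K := a p • d + (p.2 * (2 * polar K F O O m + a p)) • m
  have hy : AnalyticAt K y (0, 0) :=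
    analyticAt_const.add (analyticAt_snd.smul analyticAt_const)
  have hyc : Continuous y := by fun_prop
  have hRc : Continuous R := by fun_prop
  have hac : Continuous a := continuous_polar F hRc hRc continuous_const
  have hxc : Continuous x := by fun_prop
  have hopen : {p | polar K F (y p) (x p) (x p) ≠ 0} ∈ 𝓝 ((0 : K), (0 : K)) :=
    ((continuous_polar F hyc hxc hxc).isOpen_preimage _ isOpen_ne).mem_nhds
      (by simp [a, R, x, y, hm, hddd])
  have hsol := eventually_exists_eq_zero
    (φ := fun p : K × K => 3 * p.2 * polar K F O O m + p.1 ^ 2 * polar K F (y p) (y p) (y p))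
    (((analyticAt_const.mul analyticAt_snd).mul analyticAt_const).add
      ((analyticAt_fst.pow 2).mul (analyticAt_polar F hy hy hy))) (by simp)
    (by simpa using ((hasDerivAt_id (0 : K)).const_mul 3).mul_const (polar K F O O m))
    (by simpa using hm) hopen
  obtain ⟨s, ⟨z, hxx, hz⟩, hs⟩ :=
    ((hsol.filter_mono nhdsWithin_le_nhds).and (eventually_mem_nhdsWithin (s := {0}ᶜ))).exists
  obtain ⟨hR, hRx, hRxx⟩ := polar_eq_zero_of_normal_frame hFO hd (hflat O d hFO hd) hdm hmm
    (R := R (s, z)) (y := y (s, z)) (x := x (s, z)) rfl rfl rfl rfl hz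
  exact mul_ne_zero hs hxx (hRxx ▸ hflat _ _ hR hRx)

end TangentSections

/-! ### A curve of tangent points -/

section TangentCurves

variable {K : Type*} {n : ℕ}

section Field

variable [Field K] {F : MvPolynomial (Fin n) K}

lemma comp_tangentPt {A B : Type*} [CommRing A] [Algebra K A] [CommRing B] [Algebra K B]
    (φ : A →ₐ[K] B) (u d : Fin n → A) :
    φ ∘ tangentPt F u d = tangentPt F (φ ∘ u) (φ ∘ d) := by
  ext i
  simp only [tangentPt, Function.comp_apply, Pi.sub_apply, Pi.smul_apply, smul_eq_mul, map_sub,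
    map_mul, map_polar, map_ofNat]

lemma aeval_comp_C_comp (t : K) (u : Fin n → K) :
    Polynomial.aeval t ∘ (Polynomial.C ∘ u) = u := by
  ext i
  simp

lemma exists_aeval_ne_zero [Infinite K] {p : K[X]} (hp : p ≠ 0) :
    ∃ t : K, Polynomial.aeval t p ≠ 0 := by
  by_contra! h
  exact hp (Polynomial.funext (by simpa using h))

lemma polar_derivative_right_eq_zero [CharZero K] {P : Fin n → K[X]}
    (hP : polar K[X] F P P P = 0) :
    polar K[X] F P P (Polynomial.derivative ∘ P) = 0 := by
  have h := derivative_polar F P P P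
  rw [hP, Polynomial.derivative_zero, polar_left_comm K[X] F (Polynomial.derivative ∘ P),
    polar_right_comm K[X] F P (Polynomial.derivative ∘ P)] at h
  suffices 3 * polar K[X] F P P (Polynomial.derivative ∘ P) = 0 by simpa using this
  linear_combination -h

lemma polar_aeval_derivative_right_eq_zero [CharZero K] {P : Fin n → K[X]}
    (hP : polar K[X] F P P P = 0) (t : K) :
    polar K F (Polynomial.aeval t ∘ P) (Polynomial.aeval t ∘ P)
      (Polynomial.aeval t ∘ (Polynomial.derivative ∘ P)) = 0 := by
  rw [← map_polar, polar_derivative_right_eq_zero hP, map_zero]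

lemma linearIndependent_of_polar_ne_zero {P e Q : Fin n → K} (hP : polar K F P P e = 0)
    (hQ : polar K F P e Q ≠ 0) : LinearIndependent K ![P, Q] := by
  rw [LinearIndependent.pair_iff' (by rintro rfl; simp at hQ)]
  rintro a rfl
  simp [polar_right_comm K F P e P, hP] at hQ

lemma tangentPt_C_ne_smul_C_comp [CharZero K] {R d₀ d₁ : Fin n → K} (hR : polar K F R R d₀ = 0)
    (hd₀ : polar K F R d₀ d₀ ≠ 0)
    (hd₁ : d₁ ∉ Submodule.span K (Set.range ![R, d₀])) (g : K[X]) (p : Fin n → K) :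
    tangentPt F (Polynomial.C ∘ R)
      (Polynomial.C ∘ d₀ + (Polynomial.X : K[X]) • (Polynomial.C ∘ d₁)) ≠
        g • (Polynomial.C ∘ p) := by
  intro hgp
  have heval (t : K) : tangentPt F R (d₀ + t • d₁) = g.eval t • p := by
    rw [← aeval_comp_C_comp_add_X_smul, ← aeval_comp_C_comp t R, ← comp_tangentPt, hgp]
    ext i
    simp
  obtain ⟨f, hfd₁, hf⟩ := Submodule.exists_le_ker_of_notMem hd₁
  have hfR : f R = 0 := hf (Submodule.mem_span_of_mem ⟨0, rfl⟩)
  have hfd₀ : f d₀ = 0 := hf (Submodule.mem_span_of_mem ⟨1, rfl⟩)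
  have hfeval (t : K) :
      -(3 * polar K F R (d₀ + t • d₁) (d₀ + t • d₁) * (t * f d₁)) = g.eval t * f p := by
    simpa [tangentPt, hfR, hfd₀] using congrArg f (heval t)
  have hg : g.eval 0 ≠ 0 := fun h0 => by
    have h : tangentPt F R d₀ = 0 := by simpa [h0] using heval 0
    simpa [tangentPt, hR, polar_right_comm K F R d₀ R, hd₀] using congrArg (polar K F R d₀) h
  have hfp : f p = 0 := by simpa [hg] using hfeval 0
  have hq {t : K} (ht : t ≠ 0) : polar K F R d₀ d₀ + 2 * t * polar K F R d₀ d₁ +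
      t ^ 2 * polar K F R d₁ d₁ = 0 := by
    have h : polar K F R (d₀ + t • d₁) (d₀ + t • d₁) = 0 := by
      simpa [hfp, ht, hfd₁] using hfeval t
    simp only [map_add, map_smul, LinearMap.add_apply, LinearMap.smul_apply, smul_eq_mul,
      polar_right_comm K F R d₁ d₀] at h
    linear_combination h
  suffices 6 * polar K F R d₀ d₀ = 0 from hd₀ (by simpa using this)
  linear_combination 4 * (hq one_ne_zero + hq (neg_ne_zero.2 one_ne_zero)) - hq two_ne_zero -
    hq (neg_ne_zero.2 two_ne_zero)

lemma exists_polar_ne_zero_and_polar_ne_zero [CharZero K] {P e d : Fin n → K}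
    (he : polar K F P P e = 0) (hd : polar K F P P d = 0) (hed : polar K F P e d ≠ 0) :
    ∃ d', polar K F P P d' = 0 ∧ polar K F P d' d' ≠ 0 ∧ polar K F P e d' ≠ 0 := by
  by_contra! h
  have hs (s : K) : (polar K F P d d + 2 * s * polar K F P e d + s ^ 2 * polar K F P e e) *
      (polar K F P e d + s * polar K F P e e) = 0 := by
    rw [mul_eq_zero, or_iff_not_imp_left]
    intro hs
    have hs' := h (d + s • e) (by simp [he, hd]) (by
      convert hs using 1
      simp only [map_add, map_smul, LinearMap.add_apply, LinearMap.smul_apply, smul_eq_mul,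
        polar_right_comm K F P d e]
      ring)
    simpa using hs'
  have hdd : polar K F P d d = 0 := by simpa [hed] using hs 0
  have hee : polar K F P e e = 0 := by
    suffices 6 * (polar K F P e d * polar K F P e e) = 0 by simpa [hed] using this
    linear_combination hs 1 + hs (-1) - 2 * polar K F P e d * hdd
  simpa [hdd, hee, hed] using hs 1

lemma exists_polar_self_eq_zero_and_polar_ne_zero [CharZero K] {P e d : Fin n → K}
    (hP : polar K F P P P = 0) (he : polar K F P P e = 0) (hd : polar K F P P d = 0)
    (hed : polar K F P e d ≠ 0) :
    ∃ Q, polar K F Q Q Q = 0 ∧ polar K F P P Q = 0 ∧ polar K F P e Q ≠ 0 := by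
  obtain ⟨d', hPd', hd'd', hed'⟩ := exists_polar_ne_zero_and_polar_ne_zero he hd hed
  refine ⟨tangentPt F P d', polar_tangentPt hP hPd', ?_, ?_⟩
  · simp [tangentPt, hP, hPd']
  · rw [polar_right_comm] at he
    simp [tangentPt, he, hd'd', hed']

lemma polar_C_tangent_line {R d₀ d₁ : Fin n → K} (hd₀ : polar K F R R d₀ = 0)
    (hd₁ : polar K F R R d₁ = 0) : polar K[X] F (Polynomial.C ∘ R) (Polynomial.C ∘ R)
      (Polynomial.C ∘ d₀ + (Polynomial.X : K[X]) • (Polynomial.C ∘ d₁)) = 0 := by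
  simp only [map_add, map_smul, polar_C_comp, hd₀, hd₁, map_zero, smul_zero, add_zero]

lemma SmoothCubic.exists_tangentPt_curve [CharZero K] (hF : SmoothCubic F) (hn : 4 ≤ n)
    {R d : Fin n → K} (hd : polar K F R R d = 0) (hdd : polar K F R d d ≠ 0) :
    ∃ D : Fin n → K[X], polar K[X] F (Polynomial.C ∘ R) (Polynomial.C ∘ R) D = 0 ∧
      ∃ t x, polar K F R (Polynomial.aeval t ∘ D) (Polynomial.aeval t ∘ D) ≠ 0 ∧
        polar K F (tangentPt F R (Polynomial.aeval t ∘ D))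
          (tangentPt F R (Polynomial.aeval t ∘ D)) x = 0 ∧
        polar K F (tangentPt F R (Polynomial.aeval t ∘ D)) (Polynomial.aeval t ∘
          (Polynomial.derivative ∘ tangentPt F (Polynomial.C ∘ R) D)) x ≠ 0 := by
  obtain ⟨d₁, hd₁, hspan⟩ := exists_mem_ker_notMem (polar K F R R)
    (W := Submodule.span K (Set.range ![R, d]))
    ((Nat.succ_le_succ (finrank_range_le_card ![R, d])).trans_lt
      (by simpa using Nat.lt_of_succ_le hn))
  set D := Polynomial.C ∘ d + (Polynomial.X : K[X]) • (Polynomial.C ∘ d₁) with hD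
  obtain ⟨x, hx, hx'⟩ := hF.exists_polar_eq_zero_and_polar_derivative_ne_zero
    (tangentPt_C_ne_smul_C_comp hd hdd hspan)
  have hq : polar K[X] F (Polynomial.C ∘ R) D D ≠ 0 := fun h => hdd <| by
    simpa only [map_polar, aeval_comp_C_comp, hD, aeval_comp_C_comp_add_X_smul, zero_smul,
      add_zero, map_zero] using congrArg (Polynomial.aeval (0 : K)) h
  obtain ⟨t, ht⟩ := exists_aeval_ne_zero (mul_ne_zero hq hx')
  rw [map_mul, map_polar, map_polar, comp_tangentPt, aeval_comp_C_comp, ← hD] at ht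
  refine ⟨D, polar_C_tangent_line hd hd₁, t, Polynomial.aeval t ∘ x, left_ne_zero_of_mul ht, ?_,
    right_ne_zero_of_mul ht⟩
  simpa only [map_polar, comp_tangentPt, aeval_comp_C_comp, map_zero] using
    congrArg (Polynomial.aeval t) hx

end Field

section Topology

variable [NontriviallyNormedField K] {F : MvPolynomial (Fin n) K}

lemma hasDerivAt_polar_aeval (P : Fin n → K[X]) (Q : Fin n → K) (t : K) :
    HasDerivAt (fun t => polar K F (Polynomial.aeval t ∘ P) (Polynomial.aeval t ∘ P) Q)
      (2 * polar K F (Polynomial.aeval t ∘ P)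
        (Polynomial.aeval t ∘ (Polynomial.derivative ∘ P)) Q) t := by
  have h := (polar K[X] F P P (Polynomial.C ∘ Q)).hasDerivAt t
  have hQ : Polynomial.derivative ∘ (Polynomial.C ∘ Q) = 0 := by ext1; simp
  rw [derivative_polar, polar_left_comm K[X] F (Polynomial.derivative ∘ P), hQ, map_zero, add_zero,
    ← two_mul] at h
  simpa only [← Polynomial.coe_aeval_eq_eval, map_mul, map_ofNat, map_polar,
    aeval_comp_C_comp] using h

lemma continuous_aeval_comp (P : Fin n → K[X]) : Continuous fun t : K => Polynomial.aeval t ∘ P :=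
  continuous_pi fun i => (P i).continuous_aeval

lemma analyticAt_aeval_comp (P : Fin n → K[X]) (t : K) :
    AnalyticAt K (fun t : K => Polynomial.aeval t ∘ P) t :=
  analyticAt_pi_iff.2 fun i => analyticAt_id.aeval_polynomial (P i)

lemma eventually_exists_polar_aeval_eq_zero [CompleteSpace K] [CharZero K] {P : Fin n → K[X]}
    {Q₀ : Fin n → K} {t₀ : K}
    (h₀ : polar K F (Polynomial.aeval t₀ ∘ P) (Polynomial.aeval t₀ ∘ P) Q₀ = 0)
    (h₁ : polar K F (Polynomial.aeval t₀ ∘ P)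
      (Polynomial.aeval t₀ ∘ (Polynomial.derivative ∘ P)) Q₀ ≠ 0)
    {V : Set ((Fin n → K) × K)} (hV : V ∈ 𝓝 (Q₀, t₀)) :
    ∀ᶠ Q in 𝓝 Q₀, ∃ t, (Q, t) ∈ V ∧
      polar K F (Polynomial.aeval t ∘ P) (Polynomial.aeval t ∘ P) Q = 0 := by
  have hP := (analyticAt_aeval_comp P t₀).comp_of_eq (analyticAt_snd (p := (Q₀, t₀))) rfl
  exact eventually_exists_eq_zero
    (φ := fun p => polar K F (Polynomial.aeval p.2 ∘ P) (Polynomial.aeval p.2 ∘ P) p.1)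
    (analyticAt_polar F hP hP analyticAt_fst) h₀ (hasDerivAt_polar_aeval P Q₀ t₀)
    (mul_ne_zero two_ne_zero h₁) hV

lemma SmoothCubic.exists_eventually_mem_tangent [CompleteSpace K] [CharZero K]
    (hF : SmoothCubic F) (hn : 4 ≤ n)
    {R d : Fin n → K} (hR : polar K F R R R = 0) (hd : polar K F R R d = 0)
    (hdd : polar K F R d d ≠ 0) :
    ∃ Q₀, Q₀ ≠ 0 ∧ polar K F Q₀ Q₀ Q₀ = 0 ∧ ∀ᶠ Q in 𝓝 Q₀, ∃ d, polar K F R R d = 0 ∧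
      polar K F R d d ≠ 0 ∧ polar K F (tangentPt F R d) (tangentPt F R d) Q = 0 ∧
        LinearIndependent K ![tangentPt F R d, Q] := by
  obtain ⟨D, hD, t₀, x, hq, hx, hex⟩ := hF.exists_tangentPt_curve hn hd hdd
  set P := tangentPt F (Polynomial.C ∘ R) D with hP
  have hPt (t : K) : Polynomial.aeval t ∘ P = tangentPt F R (Polynomial.aeval t ∘ D) := by
    rw [hP, comp_tangentPt, aeval_comp_C_comp]
  simp only [← hPt] at hx hex
  have hRD (t : K) : polar K F R R (Polynomial.aeval t ∘ D) = 0 := by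
    simpa only [map_polar, aeval_comp_C_comp, map_zero] using congrArg (Polynomial.aeval t) hD
  have hPS : polar K[X] F P P P = 0 :=
    polar_tangentPt (by rw [polar_C_comp, hR, map_zero]) hD
  obtain ⟨Q₀, hQ₀, hPQ₀, hPQ₀'⟩ := exists_polar_self_eq_zero_and_polar_ne_zero
    (by rw [← map_polar, hPS, map_zero]) (polar_aeval_derivative_right_eq_zero hPS t₀) hx hex
  have hopen : {p : (Fin n → K) × K |
      polar K F R (Polynomial.aeval p.2 ∘ D) (Polynomial.aeval p.2 ∘ D) ≠ 0 ∧
      polar K F (Polynomial.aeval p.2 ∘ P)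
        (Polynomial.aeval p.2 ∘ (Polynomial.derivative ∘ P)) p.1 ≠ 0} ∈ 𝓝 (Q₀, t₀) := by
    have hc (P : Fin n → K[X]) :
        Continuous fun p : (Fin n → K) × K => Polynomial.aeval p.2 ∘ P :=
      (continuous_aeval_comp P).comp continuous_snd
    exact (((continuous_polar F continuous_const (hc D) (hc D)).isOpen_preimage _ isOpen_ne).inter
      ((continuous_polar F (hc P) (hc _) continuous_fst).isOpen_preimage _ isOpen_ne)).mem_nhds
      ⟨hq, hPQ₀'⟩
  refine ⟨Q₀, ?_, hQ₀, ?_⟩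
  · rintro rfl
    exact hPQ₀' (map_zero _)
  filter_upwards [eventually_exists_polar_aeval_eq_zero hPQ₀ hPQ₀' hopen]
    with Q ⟨t, ⟨hqt, hPQ'⟩, hPQ⟩
  refine ⟨Polynomial.aeval t ∘ D, hRD t, hqt, hPt t ▸ hPQ, hPt t ▸ ?_⟩
  exact linearIndependent_of_polar_ne_zero (polar_aeval_derivative_right_eq_zero hPS t) hPQ'

end Topology

end TangentCurves

/-! ### Classes of vectors and collinearity relations -/

section Classes

variable {K : Type*} [Field K] {n : ℕ} {F : MvPolynomial (Fin n) K}

open Classical in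
/-- The class in `H_S(K)` of the point of `S(K)` with homogeneous coordinates `v`; the value is
the junk `0` if there is no such point. -/
def vecClass (F : MvPolynomial (Fin n) K) (v : Fin n → K) : HS F :=
  if h : ∃ hv : v ≠ 0, Projectivization.mk K v hv ∈ zeroSet F then
    HClass F ⟨Projectivization.mk K v h.fst, h.snd⟩ else 0

lemma vecClass_eq_HClass {v : Fin n → K} (hv : v ≠ 0) {P : zeroSet F}
    (hP : Projectivization.mk K v hv = P) : vecClass F v = HClass F P := by
  obtain ⟨_, hmem⟩ := P
  subst hP
  exact dif_pos ⟨hv, hmem⟩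

lemma vecClass_smul {c : K} (hc : c ≠ 0) (v : Fin n → K) :
    vecClass F (c • v) = vecClass F v := by
  by_cases hv : v = 0
  · rw [hv, smul_zero]
  have hmk : Projectivization.mk K (c • v) (smul_ne_zero hc hv) = Projectivization.mk K v hv :=
    (Projectivization.mk_eq_mk_iff' ..).2 ⟨c, rfl⟩
  by_cases hmem : Projectivization.mk K v hv ∈ zeroSet F
  · rw [vecClass_eq_HClass (P := ⟨_, hmem⟩) _ hmk, vecClass_eq_HClass (P := ⟨_, hmem⟩) hv rfl]
  · rw [vecClass, vecClass, dif_neg fun h => hmem (hmk ▸ h.snd), dif_neg fun h => hmem h.snd]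

lemma HClass_eq_vecClass_rep (P : zeroSet F) : HClass F P = vecClass F P.1.rep :=
  (vecClass_eq_HClass P.1.rep_nonzero P.1.mk_rep).symm

/-- `h` is the class of a line section: all three point sums on `S` have class `h`. -/
def IsLineClass (F : MvPolynomial (Fin n) K) (h : HS F) : Prop :=
  ∀ P Q R : zeroSet F, TripleRel F P Q R → HClass F P + HClass F Q + HClass F R = h

lemma exists_isLineClass (F : MvPolynomial (Fin n) K) : ∃ h : HS F, IsLineClass F h := by
  by_cases! htriple : ∃ P Q R : zeroSet F, TripleRel F P Q R
  · obtain ⟨P, Q, R, hPQR⟩ := htriple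
    refine ⟨HClass F P + HClass F Q + HClass F R, fun P' Q' R' hPQR' => ?_⟩
    simp only [HClass, ← map_add]
    refine QuotientAddGroup.eq_iff_sub_mem.2 ⟨AddSubgroup.sub_mem _ ?_ ?_, ?_⟩
    · exact AddSubgroup.subset_closure ⟨P', Q', R', hPQR', rfl⟩
    · exact AddSubgroup.subset_closure ⟨P, Q, R, hPQR, rfl⟩
    · simp [degHom]
  · exact ⟨0, fun P Q R hPQR => (htriple P Q R hPQR).elim⟩

lemma eval_lineRestrict (F : MvPolynomial (Fin n) K) (u v : Fin n → K) (x : Fin 2 → K) :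
    eval x (lineRestrict F u v) = eval (x 0 • u + x 1 • v) F := by
  have haeval : aeval x (lineRestrict F u v) = aeval (x 0 • u + x 1 • v) F := by
    rw [lineRestrict, ← bind₁, aeval_bind₁]
    congr 2
    ext i
    simp [mul_comm]
  simpa [aeval_eq_eval] using haeval

lemma lineOnSurf_span_pair [Infinite K] {u v : Fin n → K} (huv : lineRestrict F u v = 0) :
    LineOnSurf F (Submodule.span K (Set.range ![u, v])) := by
  intro u' v' hu' hv'
  refine MvPolynomial.funext fun x => ?_
  have hmem := Submodule.add_mem _ (Submodule.smul_mem _ (x 0) hu')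
    (Submodule.smul_mem _ (x 1) hv')
  rw [Matrix.range_cons_cons_empty, Submodule.mem_span_pair] at hmem
  obtain ⟨s, t, hst⟩ := hmem
  rw [eval_lineRestrict, ← hst]
  simpa [huv] using (eval_lineRestrict F u v ![s, t]).symm

lemma tripleRel_of_lineRestrict_eq [Infinite K] {u v : Fin n → K}
    (huv : LinearIndependent K ![u, v]) {c : K} {l m : Fin 3 → K}
    (hlm : ∀ k, l k • u + m k • v ≠ 0)
    (hfac : lineRestrict F u v = C c * ∏ k, (C (m k) * X 0 - C (l k) * X 1))
    {P : Fin 3 → zeroSet F} (hP : ∀ k, Projectivization.mk K _ (hlm k) = P k) :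
    TripleRel F (P 0) (P 1) (P 2) := by
  set W := Submodule.span K (Set.range ![u, v])
  have hu : u ∈ W := Submodule.mem_span_of_mem ⟨0, rfl⟩
  have hv : v ∈ W := Submodule.mem_span_of_mem ⟨1, rfl⟩
  refine ⟨W, by simpa [IsLine] using finrank_span_eq_card huv, ?_⟩
  by_cases hc : c = 0
  · have hon (k : Fin 3) : OnLine W (P k) := by
      obtain ⟨a, ha⟩ := Projectivization.exists_smul_eq_mk_rep K _ (hlm k)
      rw [OnLine, ← hP, ← ha]
      exact W.smul_mem _ (W.add_mem (W.smul_mem _ hu) (W.smul_mem _ hv))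
    exact .inr ⟨lineOnSurf_span_pair (by rw [hfac, hc, map_zero, zero_mul]), hon 0, hon 1, hon 2⟩
  · refine .inl ⟨fun hon => ?_, u, v, hu, hv, huv, c, l, m, hlm, hc, hfac, hP 0, hP 1, hP 2⟩
    have h0 := hon u v hu hv
    rw [hfac, mul_eq_zero_iff_left (by simpa using hc), Finset.prod_eq_zero_iff] at h0
    obtain ⟨k, -, hk⟩ := h0
    have hm : m k = 0 := by simpa using congrArg (eval ![1, 0]) hk
    have hl : l k = 0 := by simpa using congrArg (eval ![0, 1]) hk
    exact hlm k (by rw [hm, hl, zero_smul, zero_smul, add_zero])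

/-- The third intersection point with the cubic `F = 0` of the line through its points `u` and
`v`; it is `0` if that line lies on the cubic. -/
def secantPt (F : MvPolynomial (Fin n) K) (u v : Fin n → K) : Fin n → K :=
  polar K F u v v • u - polar K F u u v • v

lemma polar_secantPt {u v : Fin n → K} (hu : polar K F u u u = 0) (hv : polar K F v v v = 0) :
    polar K F (secantPt F u v) (secantPt F u v) (secantPt F u v) = 0 := by
  rw [secantPt, sub_eq_add_neg, ← neg_smul, polar_smul_add_smul, hu, hv]
  ring

lemma secantPt_secantPt {u v : Fin n → K} (hu : polar K F u u u = 0) :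
    secantPt F (secantPt F u v) u = polar K F u u v ^ 3 • v := by
  simp only [secantPt, map_sub, map_smul, LinearMap.sub_apply, LinearMap.smul_apply, smul_eq_mul,
    polar_left_comm K F, polar_right_comm K F, hu]
  module

section CharZero

variable [CharZero K] {h : HS F}

lemma eval_eq_polar (hF : F.IsHomogeneous 3) (v : Fin n → K) : eval v F = polar K F v v v := by
  rw [← aeval_eq_polar hF, ← MvPolynomial.coe_aeval_eq_eval, RingHom.coe_coe]

lemma exists_mk_eq (hF : F.IsHomogeneous 3) {v : Fin n → K} (hv : v ≠ 0)
    (hFv : polar K F v v v = 0) : ∃ P : zeroSet F, Projectivization.mk K v hv = P :=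
  ⟨⟨_, mk_mem_zeroSet hF hv ((eval_eq_polar hF v).trans hFv)⟩, rfl⟩

lemma polar_rep_eq_zero (hF : F.IsHomogeneous 3) (P : zeroSet F) :
    polar K F P.1.rep P.1.rep P.1.rep = 0 :=
  (eval_eq_polar hF _).symm.trans P.2

lemma IsLineClass.vecClass_add_add (hh : IsLineClass F h) (hF : F.IsHomogeneous 3)
    {u v : Fin n → K} (huv : LinearIndependent K ![u, v]) (c : K) (l m : Fin 3 → K)
    (hlm : ∀ k, l k ≠ 0 ∨ m k ≠ 0)
    (hfac : ∀ s t, polar K F (s • u + t • v) (s • u + t • v) (s • u + t • v) =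
      c * ∏ k, (m k * s - l k * t)) :
    vecClass F (l 0 • u + m 0 • v) + vecClass F (l 1 • u + m 1 • v) +
      vecClass F (l 2 • u + m 2 • v) = h := by
  have hne (k : Fin 3) : l k • u + m k • v ≠ 0 := fun h0 => by
    have := LinearIndependent.pair_iff.1 huv _ _ h0
    exact (hlm k).elim (absurd this.1) (absurd this.2)
  have hmk (k : Fin 3) : ∃ P : zeroSet F, Projectivization.mk K _ (hne k) = P := by
    refine exists_mk_eq hF (hne k) ?_
    rw [hfac, Finset.prod_eq_zero (Finset.mem_univ k) (by ring), mul_zero]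
  choose P hP using hmk
  simp only [vecClass_eq_HClass (hne _) (hP _)]
  refine hh _ _ _ (tripleRel_of_lineRestrict_eq huv (c := c) hne
    (MvPolynomial.funext fun x => ?_) hP)
  rw [eval_lineRestrict, eval_eq_polar hF, hfac]
  simp

lemma IsLineClass.two_nsmul_vecClass_add_tangentPt (hh : IsLineClass F h)
    (hF : F.IsHomogeneous 3) {u d : Fin n → K} (hu : polar K F u u u = 0)
    (hd : polar K F u u d = 0) (hdd : polar K F u d d ≠ 0) :
    2 • vecClass F u + vecClass F (tangentPt F u d) = h := by
  have hud : LinearIndependent K ![u, d] := linearIndependent_of_polar_ne_zero hd hdd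
  convert hh.vecClass_add_add hF hud (-1) ![1, 1, polar K F d d d]
    ![0, 0, -(3 * polar K F u d d)] ?_ fun s t => ?_ using 2
  · simp [two_nsmul]
  · simp [tangentPt, sub_eq_add_neg]
  · simp [Fin.forall_fin_succ, hdd]
  · simp only [polar_smul_add_smul, hu, hd, Fin.prod_univ_three, Matrix.cons_val]
    ring

lemma IsLineClass.two_nsmul_vecClass_add (hh : IsLineClass F h) (hF : F.IsHomogeneous 3)
    {u v : Fin n → K} (huv : LinearIndependent K ![u, v]) (hu : polar K F u u u = 0)
    (hv : polar K F v v v = 0) (huuv : polar K F u u v = 0) :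
    2 • vecClass F u + vecClass F v = h := by
  convert hh.vecClass_add_add hF huv (3 * polar K F u v v) ![1, 1, 0] ![0, 0, 1] ?_
    fun s t => ?_ using 2
  · simp [two_nsmul]
  · simp
  · simp [Fin.forall_fin_succ]
  · simp only [polar_smul_add_smul, hu, hv, huuv, Fin.prod_univ_three, Matrix.cons_val]
    ring

lemma IsLineClass.vecClass_add_add_secantPt (hh : IsLineClass F h) (hF : F.IsHomogeneous 3)
    {u v : Fin n → K} (hu : polar K F u u u = 0) (hv : polar K F v v v = 0)
    (huvv : polar K F u v v ≠ 0) :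
    vecClass F u + vecClass F v + vecClass F (secantPt F u v) = h := by
  have huv : LinearIndependent K ![u, v] := by
    rw [polar_left_comm, polar_right_comm] at huvv
    exact LinearIndependent.pair_symm_iff.1 (linearIndependent_of_polar_ne_zero hv huvv)
  convert hh.vecClass_add_add hF huv 3 ![1, 0, polar K F u v v] ![0, 1, -polar K F u u v] ?_
    fun s t => ?_ using 3
  · simp
  · simp
  · simp [secantPt, sub_eq_add_neg]
  · simp [Fin.forall_fin_succ, huvv]
  · simp only [polar_smul_add_smul, hu, hv, Fin.prod_univ_three, Matrix.cons_val]
    ring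

lemma IsLineClass.exists_third_of_factor (hh : IsLineClass F h) (hF : F.IsHomogeneous 3)
    {u v : Fin n → K} (huv : LinearIndependent K ![u, v]) (l m : Fin 2 → K) (a b : K)
    (hlm : ∀ k, l k ≠ 0 ∨ m k ≠ 0)
    (hfac : ∀ s t, polar K F (s • u + t • v) (s • u + t • v) (s • u + t • v) =
      (m 0 * s - l 0 * t) * (m 1 * s - l 1 * t) * (a * s + b * t)) :
    ∃ R : zeroSet F, vecClass F (l 0 • u + m 0 • v) + vecClass F (l 1 • u + m 1 • v) +
      HClass F R = h := by
  suffices ∃ c p q, (p ≠ 0 ∨ q ≠ 0) ∧ ∀ s t, a * s + b * t = c * (q * s - p * t) by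
    obtain ⟨c, p, q, hpq, hab⟩ := this
    have hw : p • u + q • v ≠ 0 := fun h0 => by
      have := LinearIndependent.pair_iff.1 huv _ _ h0
      exact hpq.elim (absurd this.1) (absurd this.2)
    obtain ⟨R, hR⟩ := exists_mk_eq hF hw (by rw [hfac, hab]; ring)
    refine ⟨R, vecClass_eq_HClass hw hR ▸
      hh.vecClass_add_add hF huv c ![l 0, l 1, p] ![m 0, m 1, q] ?_ fun s t => ?_⟩
    · simp [Fin.forall_fin_succ, hpq, hlm]
    · simp only [hfac, hab, Fin.prod_univ_three, Matrix.cons_val]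
      ring
  by_cases hab : a = 0 ∧ b = 0
  · exact ⟨0, 1, 0, by simp, by simp [hab]⟩
  · exact ⟨1, -b, a, by rwa [neg_ne_zero, ← not_and_or, and_comm], fun s t => by ring⟩

lemma IsLineClass.exists_third (hh : IsLineClass F h) (hF : F.IsHomogeneous 3) (hn : 3 ≤ n)
    (P Q : zeroSet F) : ∃ R : zeroSet F, HClass F P + HClass F Q + HClass F R = h := by
  have hP := polar_rep_eq_zero hF P
  have hQ := polar_rep_eq_zero hF Q
  rw [HClass_eq_vecClass_rep P, HClass_eq_vecClass_rep Q]
  obtain rfl | hPQ := eq_or_ne P Q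
  · obtain ⟨d, hd, hPd⟩ := exists_mem_ker_notMem (polar K F P.1.rep P.1.rep)
      (W := Submodule.span K {P.1.rep})
      (by simpa [finrank_span_singleton P.1.rep_nonzero] using Nat.lt_of_succ_le hn)
    have hli : LinearIndependent K ![P.1.rep, d] :=
      (LinearIndependent.pair_iff' P.1.rep_nonzero).2 fun c hc =>
        hPd (Submodule.mem_span_singleton.2 ⟨c, hc⟩)
    simpa using hh.exists_third_of_factor hF hli ![1, 1] ![0, 0] (3 * polar K F P.1.rep d d)
      (polar K F d d d) (by simp [Fin.forall_fin_succ]) fun s t => by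
        simp only [polar_smul_add_smul, hP, hd, Matrix.cons_val]
        ring
  · have hli : LinearIndependent K ![P.1.rep, Q.1.rep] := by
      refine (LinearIndependent.pair_iff' P.1.rep_nonzero).2 fun c hc => hPQ (Subtype.ext ?_)
      rw [← P.1.mk_rep, ← Q.1.mk_rep, eq_comm, Projectivization.mk_eq_mk_iff']
      exact ⟨c, hc⟩
    simpa using hh.exists_third_of_factor hF hli ![1, 0] ![0, 1]
      (-(3 * polar K F P.1.rep P.1.rep Q.1.rep)) (-(3 * polar K F P.1.rep Q.1.rep Q.1.rep))
      (by simp [Fin.forall_fin_succ]) fun s t => by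
        simp only [polar_smul_add_smul, hP, hQ, Matrix.cons_val]
        ring

end CharZero

end Classes

/-! ### Local constancy of the class map -/

section LocalConstancy

variable {K : Type*} {n : ℕ}

/-- The affine cone over `S(K)`, on which `vecClass F` is studied. -/
def cone [Field K] (F : MvPolynomial (Fin n) K) : Set (Fin n → K) :=
  {v | polar K F v v v = 0}

lemma smul_mem_cone [Field K] {F : MvPolynomial (Fin n) K} {v : Fin n → K} (hv : v ∈ cone F)
    (c : K) : c • v ∈ cone F := by
  simp [cone, show polar K F v v v = 0 from hv]

lemma polar_add_smul_eq_eval [Field K] (F : MvPolynomial (Fin n) K) (v d : Fin n → K) (s : K) :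
    polar K F (v + s • d) (v + s • d) (v + s • d) = (Cubic.toPoly ⟨polar K F d d d,
      3 * polar K F v d d, 3 * polar K F v v d, polar K F v v v⟩).eval s := by
  have h := polar_smul_add_smul F 1 s v d
  rw [one_smul] at h
  rw [h]
  simp only [Cubic.toPoly, Polynomial.eval_add, Polynomial.eval_mul, Polynomial.eval_C,
    Polynomial.eval_pow, Polynomial.eval_X]
  ring

lemma finite_setOf_add_smul_mem_cone [Field K] {F : MvPolynomial (Fin n) K} {d : Fin n → K}
    (hd : polar K F d d d ≠ 0) (v : Fin n → K) : {s : K | v + s • d ∈ cone F}.Finite :=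
  (Polynomial.finite_setOfPred_isRoot (Cubic.ne_zero_of_a_ne_zero hd)).subset fun s hs =>
    (polar_add_smul_eq_eval F v d s).symm.trans hs

section Topology

variable [NontriviallyNormedField K] {F : MvPolynomial (Fin n) K}

lemma hasDerivAt_polar_add_smul (F : MvPolynomial (Fin n) K) (v m : Fin n → K) :
    HasDerivAt (fun t : K => polar K F (v + t • m) (v + t • m) (v + t • m))
      (3 * polar K F v v m) 0 := by
  simp only [polar_add_smul_eq_eval]
  refine (Polynomial.hasDerivAt _ 0).congr_deriv ?_
  simp [Cubic.toPoly]

lemma eventuallyConst_vecClass_smul {c : K} (hc : c ≠ 0) {v : Fin n → K}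
    (hv : EventuallyConst (vecClass F) (𝓝[cone F] v)) :
    EventuallyConst (vecClass F) (𝓝[cone F] (c • v)) := by
  have hinv : Tendsto (c⁻¹ • ·) (𝓝[cone F] (c • v)) (𝓝[cone F] v) := by
    refine tendsto_nhdsWithin_of_tendsto_nhds_of_eventually_within _ ?_ ?_
    · exact tendsto_nhdsWithin_of_tendsto_nhds
        (by simpa [inv_smul_smul₀ hc] using (continuous_const_smul c⁻¹).tendsto (c • v))
    · filter_upwards [self_mem_nhdsWithin] with w hw using smul_mem_cone hw _
  exact (hv.comp_tendsto hinv).congr <| .of_forall fun w => vecClass_smul (inv_ne_zero hc) w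

lemma continuous_secantPt (F : MvPolynomial (Fin n) K) (A : Fin n → K) :
    Continuous (secantPt F A) :=
  ((continuous_polar F continuous_const continuous_id continuous_id).smul continuous_const).sub
    ((continuous_polar F continuous_const continuous_const continuous_id).smul continuous_id)

variable [CharZero K]

lemma eventuallyConst_vecClass_of_secantPt (hF : F.IsHomogeneous 3) {A Q : Fin n → K}
    (hA : A ∈ cone F) (hAQQ : polar K F A Q Q ≠ 0)
    (hconst : EventuallyConst (vecClass F) (𝓝[cone F] (secantPt F A Q))) :
    EventuallyConst (vecClass F) (𝓝[cone F] Q) := by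
  obtain ⟨h, hh⟩ := exists_isLineClass F
  have hsecant : Tendsto (secantPt F A) (𝓝[cone F] Q) (𝓝[cone F] (secantPt F A Q)) :=
    tendsto_nhdsWithin_of_tendsto_nhds_of_eventually_within _
      ((continuous_secantPt F A).continuousWithinAt)
      (eventually_mem_nhdsWithin.mono fun Q' hQ' => polar_secantPt hA hQ')
  have hne : ∀ᶠ Q' in 𝓝[cone F] Q, polar K F A Q' Q' ≠ 0 :=
    (continuous_polar F continuous_const continuous_id
      continuous_id).continuousWithinAt.eventually_ne hAQQ
  refine ((hconst.comp_tendsto hsecant).comp (h - vecClass F A - ·)).congr ?_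
  filter_upwards [hne, self_mem_nhdsWithin] with Q' hne' hQ'
  rw [Function.comp_apply, ← hh.vecClass_add_add_secantPt hF hA hQ' hne', Function.comp_apply]
  abel

variable [CompleteSpace K]

lemma eventually_exists_add_add_smul_mem_cone {v m : Fin n → K} (hv : v ∈ cone F)
    (hm : polar K F v v m ≠ 0) (d : Fin n → K) {U : Set (Fin n → K)} (hU : U ∈ 𝓝 v) :
    ∀ᶠ s in 𝓝 (0 : K), ∃ w : K, v + s • d + w • m ∈ U ∧ v + s • d + w • m ∈ cone F := by
  have hline : AnalyticAt K (fun z : K × K => v + z.1 • d + z.2 • m) (0, 0) :=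
    (analyticAt_const.add (analyticAt_fst.smul analyticAt_const)).add
      (analyticAt_snd.smul analyticAt_const)
  exact eventually_exists_eq_zero (V := {z | v + z.1 • d + z.2 • m ∈ U})
    (analyticAt_polar F hline hline hline) (by simpa using show polar K F v v v = 0 from hv)
    (by simpa using hasDerivAt_polar_add_smul F v m) (mul_ne_zero three_ne_zero hm)
    (hline.continuousAt (by simpa using hU))

lemma SmoothCubic.exists_mem_cone_apply_ne_zero (hF : SmoothCubic F) (hn : 3 ≤ n)
    {ℓ : (Fin n → K) →ₗ[K] K} (hℓ : ℓ ≠ 0) {v : Fin n → K} (hv₀ : v ≠ 0) (hv : v ∈ cone F)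
    {U : Set (Fin n → K)} (hU : U ∈ 𝓝 v) : ∃ w ∈ U, w ∈ cone F ∧ ℓ w ≠ 0 := by
  by_cases hℓv : ℓ v = 0
  swap
  · exact ⟨v, mem_of_mem_nhds hU, hv, hℓv⟩
  have hT : polar K F v v ≠ 0 := fun h => hv₀ (hF.eq_zero_of_polar_eq_zero h)
  obtain ⟨m, hm⟩ := Module.Dual.exists_forall_ne_zero_of_forall_exists ![ℓ, polar K F v v]
    (by simpa [Fin.forall_fin_two] using ⟨DFunLike.exists_ne hℓ, DFunLike.exists_ne hT⟩)
  obtain ⟨d, hℓd, hd⟩ := hF.exists_mem_ker_polar_ne_zero hn hℓ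
  have hoff : ∀ᶠ s in 𝓝[≠] (0 : K), v + s • d ∉ cone F :=
    nhdsNE_le_cofinite 0 (finite_setOf_add_smul_mem_cone hd v).compl_mem_cofinite
  obtain ⟨s, ⟨t, hU, hcone⟩, hs⟩ := (((eventually_exists_add_add_smul_mem_cone hv (hm 1) d
    hU).filter_mono nhdsWithin_le_nhds).and hoff).exists
  refine ⟨_, hU, hcone, ?_⟩
  have ht : t ≠ 0 := by
    rintro rfl
    exact hs (by simpa using hcone)
  simpa [hℓv, hℓd, ht] using hm 0

lemma SmoothCubic.exists_eventuallyConst_vecClass (hF : SmoothCubic F) (hn : 4 ≤ n)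
    {O : Fin n → K} (hO : O ≠ 0) (hFO : O ∈ cone F) :
    ∃ Q₀, Q₀ ≠ 0 ∧ Q₀ ∈ cone F ∧ EventuallyConst (vecClass F) (𝓝[cone F] Q₀) := by
  obtain ⟨R, d, hR, hd, hdd⟩ := hF.exists_polar_ne_zero (Nat.le_of_succ_le hn) hO hFO
  obtain ⟨Q₀, hQ₀, hFQ₀, hQ⟩ := hF.exists_eventually_mem_tangent hn hR hd hdd
  obtain ⟨h, hh⟩ := exists_isLineClass F
  refine ⟨Q₀, hQ₀, hFQ₀, (EventuallyConst.const (h - 2 • (h - 2 • vecClass F R))).congr ?_⟩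
  filter_upwards [nhdsWithin_le_nhds hQ, self_mem_nhdsWithin] with Q ⟨d', hd', hdd', hPQ, hli⟩ hFQ
  rw [← hh.two_nsmul_vecClass_add_tangentPt hF.1 hR hd' hdd', add_sub_cancel_left,
    hh.two_nsmul_vecClass_add_tangentPt hF.1 hR hd' hdd', ←
    hh.two_nsmul_vecClass_add hF.1 hli (polar_tangentPt hR hd') hFQ hPQ, add_sub_cancel_left]

/- Near `P` there is a point `B` off the tangent hyperplane at `Q`; the secant through `Q` and `B`
carries the local constancy at `B` over to `Q`. -/
lemma SmoothCubic.eventuallyConst_vecClass_of_eventuallyConst (hF : SmoothCubic F) (hn : 3 ≤ n)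
    {P Q : Fin n → K} (hP₀ : P ≠ 0) (hP : P ∈ cone F) (hQ₀ : Q ≠ 0) (hQ : Q ∈ cone F)
    (hconst : EventuallyConst (vecClass F) (𝓝[cone F] P)) :
    EventuallyConst (vecClass F) (𝓝[cone F] Q) := by
  obtain ⟨κ, hκ⟩ := eventuallyConst_iff_exists_eventuallyEq.1 hconst
  obtain ⟨B, hconstB, hB, hα⟩ := hF.exists_mem_cone_apply_ne_zero hn
    (fun h => hQ₀ (hF.eq_zero_of_polar_eq_zero h) : polar K F Q Q ≠ 0) hP₀ hP
    (eventually_nhdsWithin_iff.1 (eventually_eventually_nhdsWithin.2 hκ))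
  refine eventuallyConst_vecClass_of_secantPt hF.1 (polar_secantPt hQ hB) ?_ ?_
  · rw [secantPt, map_sub, map_smul, map_smul]
    simpa [polar_left_comm K F B, polar_right_comm K F Q B, show polar K F Q Q Q = 0 from hQ]
      using hα
  · rw [secantPt_secantPt hQ]
    exact eventuallyConst_vecClass_smul (pow_ne_zero 3 hα)
      (eventuallyConst_iff_exists_eventuallyEq.2 ⟨κ, hconstB hB⟩)

lemma SmoothCubic.eventuallyConst_vecClass (hF : SmoothCubic F) (hn : 4 ≤ n) {v : Fin n → K}
    (hv₀ : v ≠ 0) (hv : v ∈ cone F) : EventuallyConst (vecClass F) (𝓝[cone F] v) := by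
  obtain ⟨Q₀, hQ₀, hFQ₀, hconst⟩ := hF.exists_eventuallyConst_vecClass hn hv₀ hv
  exact hF.eventuallyConst_vecClass_of_eventuallyConst (Nat.le_of_succ_le hn) hQ₀ hFQ₀ hv₀ hv hconst

end Topology

end LocalConstancy

/-! ### Finiteness of `H⁰` -/

section Finiteness

/- As `x - y + x₀ = h - (h - x - x₀) - y`, the translate of `C` by `-x₀` is a subgroup; it is the
kernel of `deg`. -/
lemma finite_ker_of_closure_eq_top {A : Type*} [AddCommGroup A] {C : Set A} (hC : C.Finite)
    (hgen : AddSubgroup.closure C = ⊤) {h : A} (hthird : ∀ x ∈ C, ∀ y ∈ C, h - x - y ∈ C)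
    {deg : A →+ ℤ} (hdeg : ∀ x ∈ C, deg x = 1) : Finite deg.ker := by
  obtain rfl | ⟨x₀, hx₀⟩ := C.eq_empty_or_nonempty
  · have : Subsingleton A := by
      rw [← AddSubgroup.subsingleton_iff, ← subsingleton_iff_bot_eq_top, ← hgen,
        AddSubgroup.closure_empty]
    infer_instance
  have hsub {x y : A} (hx : x ∈ C) (hy : y ∈ C) : x - y + x₀ ∈ C := by
    convert hthird _ (hthird x hx x₀ hx₀) y hy using 1
    abel
  let B : AddSubgroup A := AddSubgroup.ofSub {x | x + x₀ ∈ C} ⟨0, by simpa⟩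
    fun x hx y hy => by simpa [sub_eq_add_neg] using hsub hx hy
  have hB : (B : Set A).Finite :=
    Set.Finite.preimage (f := (· + x₀)) (add_left_injective x₀).injOn hC
  have htop : B ⊔ AddSubgroup.zmultiples x₀ = ⊤ := by
    refine top_le_iff.1 (hgen ▸ (AddSubgroup.closure_le _).2 fun x hx => ?_)
    rw [← sub_add_cancel x x₀]
    refine AddSubgroup.add_mem_sup ?_ (AddSubgroup.mem_zmultiples x₀)
    exact show x - x₀ + x₀ ∈ C by rwa [sub_add_cancel]
  refine (hB.subset fun x hx => ?_).to_subtype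
  obtain ⟨b, hb, -, ⟨k, rfl⟩, rfl⟩ :=
    AddSubgroup.mem_sup.1 (htop ▸ AddSubgroup.mem_top x : x ∈ B ⊔ AddSubgroup.zmultiples x₀)
  have hdegb : deg b = 0 := by
    have hsum := hdeg _ hb
    rwa [map_add, hdeg x₀ hx₀, add_eq_right] at hsum
  have hk : k = 0 := by simpa [hdeg x₀ hx₀, hdegb] using hx
  simpa [hk] using hb

variable {K : Type*} {n : ℕ}

lemma closure_range_HClass [Field K] (F : MvPolynomial (Fin n) K) :
    AddSubgroup.closure (Set.range (HClass F)) = ⊤ := by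
  refine top_le_iff.1 fun x _ => ?_
  obtain ⟨x, rfl⟩ := QuotientAddGroup.mk'_surjective _ x
  induction x using FreeAbelianGroup.induction_on with
  | zero => exact zero_mem _
  | of P => exact AddSubgroup.subset_closure ⟨P, rfl⟩
  | neg P hP => simpa using hP
  | add x y hx hy => rw [map_add]; exact add_mem (hx trivial) (hy trivial)

lemma finite_H0 [Field K] [CharZero K] {F : MvPolynomial (Fin n) K} (hF : F.IsHomogeneous 3)
    (hn : 3 ≤ n) (hfin : (Set.range (HClass F)).Finite) : Finite (H0 F) := by
  obtain ⟨h, hh⟩ := exists_isLineClass F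
  refine finite_ker_of_closure_eq_top hfin (closure_range_HClass F) (h := h) ?_
    (Set.forall_mem_range.2 (HdegHom_HClass F))
  rintro _ ⟨P, rfl⟩ _ ⟨Q, rfl⟩
  obtain ⟨R, hR⟩ := hh.exists_third hF hn P Q
  exact ⟨R, by rw [← hR, sub_sub, add_sub_cancel_left]⟩

lemma SmoothCubic.isLocallyConstant_domRestrict_vecClass [NontriviallyNormedField K]
    [CompleteSpace K] [CharZero K] {F : MvPolynomial (Fin n) K} (hF : SmoothCubic F) (hn : 4 ≤ n)
    {s : Set (Fin n → K)} (hs : s ⊆ cone F \ {0}) :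
    IsLocallyConstant (s.domRestrict (vecClass F)) := by
  refine (IsLocallyConstant.iff_eventually_eq _).2 fun v => ?_
  obtain ⟨κ, hκ⟩ := eventuallyConst_iff_exists_eventuallyEq.1
    ((hF.eventuallyConst_vecClass hn (hs v.2).2 (hs v.2).1).anti
      (nhdsWithin_mono v.1 fun w hw => (hs hw).1))
  have hv : vecClass F v = κ := hκ.self_of_nhdsWithin v.2
  rw [← map_nhds_subtype_val] at hκ
  filter_upwards [eventually_map.1 hκ] with w hw
  exact hw.trans hv.symm

lemma isClosed_cone [Field K] [TopologicalSpace K] [IsTopologicalSemiring K] [T1Space K]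
    (F : MvPolynomial (Fin n) K) : IsClosed (cone F) :=
  isClosed_singleton.preimage (continuous_polar F continuous_id continuous_id continuous_id)

lemma exists_norm_smul_eq_one [NormedField K] {v : Fin n → K} (hv : v ≠ 0) :
    ∃ c : K, c ≠ 0 ∧ ‖c • v‖ = 1 := by
  obtain ⟨i, hi⟩ : ∃ i, ‖v‖ ≤ ‖v i‖ := by
    by_contra! h
    exact lt_irrefl _ ((pi_norm_lt_iff (norm_pos_iff.2 hv)).2 h)
  have hvi : ‖v i‖ = ‖v‖ := (norm_le_pi_norm v i).antisymm hi
  have hv0 : ‖v‖ ≠ 0 := norm_ne_zero_iff.2 hv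
  refine ⟨(v i)⁻¹, inv_ne_zero (norm_ne_zero_iff.1 (hvi ▸ hv0)), ?_⟩
  rw [norm_smul, norm_inv, hvi, inv_mul_cancel₀ hv0]

lemma SmoothCubic.finite_range_HClass [NontriviallyNormedField K] [ProperSpace K]
    [CharZero K] {F : MvPolynomial (Fin n) K} (hF : SmoothCubic F) (hn : 4 ≤ n) :
    (Set.range (HClass F)).Finite := by
  let s : Set (Fin n → K) := Metric.sphere 0 1 ∩ cone F
  have hs : s ⊆ cone F \ {0} := fun v hv => ⟨hv.2, by rintro rfl; simpa using hv.1⟩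
  have : CompactSpace s :=
    isCompact_iff_compactSpace.1 ((isCompact_sphere 0 1).inter_right (isClosed_cone F))
  refine (hF.isLocallyConstant_domRestrict_vecClass hn hs).range_finite.subset ?_
  rintro _ ⟨P, rfl⟩
  obtain ⟨c, hc, hnorm⟩ := exists_norm_smul_eq_one P.1.rep_nonzero
  refine ⟨⟨c • P.1.rep, by simpa using hnorm, smul_mem_cone (polar_rep_eq_zero hF.1 P) c⟩, ?_⟩
  exact (vecClass_smul hc _).trans (HClass_eq_vecClass_rep P).symm

lemma isOpenQuotientMap_mk [Field K] [TopologicalSpace K] [ContinuousMul K] :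
    @IsOpenQuotientMap _ _ _ (projTop K n)
      fun v : {v : Fin n → K // v ≠ 0} => Projectivization.mk K v.1 v.2 := by
  let _ := projTop K n
  refine .of_isOpenMap_isQuotientMap (fun U hU => ?_)
    ⟨⟨rfl⟩, fun P => ⟨⟨P.rep, P.rep_nonzero⟩, P.mk_rep⟩⟩
  let scale (c : Kˣ) (w : {v : Fin n → K // v ≠ 0}) : {v : Fin n → K // v ≠ 0} :=
    ⟨c • w.1, smul_ne_zero c.ne_zero w.2⟩
  have hscale (c : Kˣ) : Continuous (scale c) :=
    (continuous_subtype_val.const_smul (c : K)).subtype_mk _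
  refine isOpen_coinduced.2 ?_
  convert isOpen_iUnion fun c : Kˣ => hU.preimage (hscale c) using 1
  ext w
  simp only [Set.mem_preimage, Set.mem_image, Set.mem_iUnion, Projectivization.mk_eq_mk_iff]
  constructor
  · rintro ⟨u, hu, c, hc⟩
    exact ⟨c, by rwa [show scale c w = u from Subtype.ext hc]⟩
  · rintro ⟨c, hc⟩
    exact ⟨_, hc, c, rfl⟩

lemma mem_cone_of_mk_mem_zeroSet [Field K] [CharZero K] {F : MvPolynomial (Fin n) K}
    (hF : F.IsHomogeneous 3) {v : Fin n → K} {hv : v ≠ 0}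
    (h : Projectivization.mk K v hv ∈ zeroSet F) : v ∈ cone F := by
  obtain ⟨c, hc⟩ := Projectivization.exists_smul_eq_mk_rep K v hv
  have hrep := smul_mem_cone (polar_rep_eq_zero hF ⟨_, h⟩) (c⁻¹ : Kˣ).1
  rwa [← hc, ← Units.smul_def, inv_smul_smul] at hrep

lemma SmoothCubic.isLocallyConstant_HClass [NontriviallyNormedField K] [CompleteSpace K]
    [CharZero K] {F : MvPolynomial (Fin n) K} (hF : SmoothCubic F) (hn : 4 ≤ n) :
    @IsLocallyConstant _ _ (surfTop F) (HClass F) := by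
  let _ := projTop K n
  have hq := (isOpenQuotientMap_mk (K := K) (n := n)).restrictPreimage (zeroSet F)
  have hcont : Continuous fun v : (fun v : {v : Fin n → K // v ≠ 0} =>
      Projectivization.mk K v.1 v.2) ⁻¹' zeroSet F =>
      (⟨v.1.1, mem_cone_of_mk_mem_zeroSet hF.1 v.2, v.1.2⟩ : ↥(cone F \ {0})) :=
    (continuous_subtype_val.comp continuous_subtype_val).subtype_mk _
  intro s
  refine hq.isQuotientMap.isOpen_preimage.1 ?_
  convert ((hF.isLocallyConstant_domRestrict_vecClass hn subset_rfl).comp_continuous hcont) s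
    using 1
  ext v
  exact iff_of_eq <| congrArg (· ∈ s)
    (vecClass_eq_HClass v.1.2 (P := (zeroSet F).restrictPreimage _ v) rfl).symm

end Finiteness

/-! ### Local fields as normed fields -/

lemma exists_nontriviallyNormedField_of_isHomeomorph {K L : Type*} [i : Field K]
    [τ : TopologicalSpace K] [NontriviallyNormedField L] [CharZero L] [LocallyCompactSpace L]
    {e : K ≃+* L} (he : IsHomeomorph e) :
    ∃ N : NontriviallyNormedField K, N.toField = i ∧
      N.toMetricSpace.toPseudoMetricSpace.toUniformSpace.toTopologicalSpace = τ ∧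
      CharZero K ∧ LocallyCompactSpace K := by
  let N₀ : NormedField K := NormedField.induced K L e e.injective
  let N : NontriviallyNormedField K :=
    { N₀ with
      non_trivial := by
        obtain ⟨x, hx⟩ := NontriviallyNormedField.non_trivial (α := L)
        refine ⟨e.symm x, ?_⟩
        change 1 < ‖e (e.symm x)‖
        rwa [e.apply_symm_apply] }
  refine ⟨N, rfl, ?_, charZero_of_injective_ringHom (f := e.symm.toRingHom) e.symm.injective,
    he.isClosedEmbedding.locallyCompactSpace⟩
  rw [he.isInducing.eq_induced]
  rfl

lemma topologicalSpace_spectralNorm_eq_induced {k K ι : Type*} [NontriviallyNormedField k]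
    [CompleteSpace k] [IsUltrametricDist k] [Field K] [Algebra k K] [FiniteDimensional k K]
    (e : K ≃ₗ[k] (ι → k)) :
    letI := spectralNorm.normedField k K
    (inferInstance : TopologicalSpace K) = TopologicalSpace.induced e inferInstance := by
  let := spectralNorm.normedField k K
  let := spectralNorm.normedSpace k K
  exact e.toContinuousLinearEquiv.toHomeomorph.isInducing.eq_induced

lemma IsLocalField.exists_nontriviallyNormedField {K : Type*} [i : Field K]
    [τ : TopologicalSpace K] (hK : IsLocalField K) :
    ∃ N : NontriviallyNormedField K, N.toField = i ∧
      N.toMetricSpace.toPseudoMetricSpace.toUniformSpace.toTopologicalSpace = τ ∧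
      CharZero K ∧ LocallyCompactSpace K := by
  obtain ⟨e, he⟩ | ⟨e, he⟩ | ⟨p, _, _, f, m, e, hfe, he⟩ := hK
  · exact exists_nontriviallyNormedField_of_isHomeomorph he
  · exact exists_nontriviallyNormedField_of_isHomeomorph he
  · let _ : Algebra ℚ_[p] K := f.toAlgebra
    let L : K ≃ₗ[ℚ_[p]] (Fin m → ℚ_[p]) := { e with map_smul' := fun c x => hfe c x }
    have : FiniteDimensional ℚ_[p] K := Module.Finite.equiv L.symm
    refine ⟨spectralNorm.nontriviallyNormedField ℚ_[p] K, rfl, ?_,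
      charZero_of_injective_ringHom f.injective, he.isClosedEmbedding.locallyCompactSpace⟩
    rw [he.isInducing.eq_induced]
    exact topologicalSpace_spectralNorm_eq_induced L

end CubicSurf

open CubicSurf MvPolynomial in
theorem H0_finite_and_class_map_locally_constant_general {K : Type*} [Field K]
    [TopologicalSpace K] (hK : IsLocalField K) {n : ℕ} (hn : 4 ≤ n) (F : MvPolynomial (Fin n) K)
    (hF : SmoothCubic F) :
    Finite (H0 F) ∧ @IsLocallyConstant _ _ (surfTop F) fun P : zeroSet F => HClass F P := by
  obtain ⟨N, rfl, rfl, _, _⟩ := hK.exists_nontriviallyNormedField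
  have : ProperSpace K := ProperSpace.of_locallyCompactSpace K
  exact ⟨finite_H0 hF.1 ((Nat.le_succ 3).trans hn) (hF.finite_range_HClass hn),
    hF.isLocallyConstant_HClass hn⟩

open CubicSurf MvPolynomial in
/-- Let `K` be a local field (`ℝ`, `ℂ`, or a finite extension of
`ℚ_p`), and let `S` be a smooth cubic surface over `K`. Then (i) `H⁰_S(K)` is finite,
and (ii) the map `S(K) → H_S(K)`, `P ↦ [P]`, is locally constant for the topology on
`S(K)` induced by that of `K`. -/
theorem H0_finite_and_class_map_locally_constant
    {K : Type*} [Field K] [TopologicalSpace K] (hK : IsLocalField K)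
    (F : MvPolynomial (Fin 4) K) (hF : SmoothCubic F) :
    Finite (H0 F) ∧
    @IsLocallyConstant _ _ (surfTop F) (fun P : zeroSet F => HClass F P) :=
  H0_finite_and_class_map_locally_constant_general hK le_rfl F hF
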